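/- arXiv:2311.03091 — 11 statements merged into one kernel-verified Lean document; each statement's English description precedes it below -/
import Mathlib

section
/- Let X₁, X₂, X₃ be complex Hilbert spaces and X_ext = X₁ × X₂ × X₃. Let A_ext be a dissipative linear operator on X_ext with domain D(A_ext) and components A_ext = (A₁ₑ, A₂ₑ, A₃ₑ). Let E₁, Q₁ : X₁ → X₁, Q₂ : X₂ → X₂, E₃ : X₃ → X₃ be bounded and boundedly invertible linear operators with E₁*Q₁ coercive, and define E_ext(x₁,x₂,x₃) = (E₁x₁, 0, E₃x₃) and Q_ext(x₁,x₂,x₃) = (Q₁x₁, Q₂x₂, 0). Assume there exists s ∈ ℂ with Re s > 0 such that s·E_ext − A_ext∘Q_ext, with domain {x ∈ X_ext : Q_ext x ∈ D(A_ext)}, is boundedly invertible. Define the operator A on X₁ × X₂ by A(x₁,x₂) = (A₁ₑ(x₁,x₂,0), A₂ₑ(x₁,x₂,0)) with domain D(A) = {(x₁,x₂) : (x₁,x₂,0) ∈ D(A_ext)}, and set E(x₁,x₂) = (E₁x₁, 0), Q(x₁,x₂) = (Q₁x₁, Q₂x₂). Then A is dissipative and s·E − A∘Q, with domain {x ∈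 X₁ × X₂ : Qx ∈ D(A)}, is boundedly invertible; in particular the pair (E, AQ) is regular. -/
/-! The third component of `s E_ext - A_ext Q_ext` at `(x₁, x₂, x₃)` is `s E₃ x₃ - A₃ₑ (Q₁ x₁, Q₂ x₂, 0)`,
while the first two components form the reduced pencil at `(x₁, x₂)` and do not involve `x₃`.
Since `s ≠ 0` and `E₃` is invertible, every `(x₁, x₂)` in the reduced domain has a lift for which the
third component vanishes (`exists_lift`). Hence the reduced pencil at `(x₁, x₂)` equals `(f₁, f₂)` exactly
when the extended pencil at that lift equals `(f₁, f₂, 0)`, so bijectivity and the bound on the inverse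
are inherited, with the same constant. Dissipativity is that of `A_ext` restricted to vectors `(x₁, x₂, 0)`. -/

noncomputable section

open Complex ContinuousLinearMap
open scoped ComplexInnerProductSpace

variable {X₁ X₂ X₃ : Type*}
  [NormedAddCommGroup X₁] [InnerProductSpace ℂ X₁] [CompleteSpace X₁]
  [NormedAddCommGroup X₂] [InnerProductSpace ℂ X₂] [CompleteSpace X₂]
  [NormedAddCommGroup X₃] [InnerProductSpace ℂ X₃] [CompleteSpace X₃]

/-- `Re ⟨x, y⟩` on the Hilbert-space product `X₁ × X₂ × X₃` (componentwise sum). -/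
def reInner3 (x y : X₁ × X₂ × X₃) : ℝ :=
  (⟪x.1, y.1⟫).re + (⟪x.2.1, y.2.1⟫).re + (⟪x.2.2, y.2.2⟫).re

/-- A (possibly unbounded) operator on the Hilbert space `X₁ × X₂ × X₃` is dissipative if
`Re ⟨A x, x⟩ ≤ 0` for all `x` in its domain. -/
def Dissipative3 (A : (X₁ × X₂ × X₃) →ₗ.[ℂ] (X₁ × X₂ × X₃)) : Prop :=
  ∀ x : A.domain, reInner3 (A x) (x : X₁ × X₂ × X₃) ≤ 0

/-- A bounded operator is coercive if it is self-adjoint and strictly positive. -/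
def Coercive {X : Type*} [NormedAddCommGroup X] [InnerProductSpace ℂ X] [CompleteSpace X]
    (T : X →L[ℂ] X) : Prop :=
  IsSelfAdjoint T ∧ ∃ c : ℝ, 0 < c ∧ ∀ x : X, c * ‖x‖ ^ 2 ≤ (⟪T x, x⟫).re

/-- The extended block operator `E_ext (x₁, x₂, x₃) = (E₁ x₁, 0, E₃ x₃)`. -/
def Eext (E₁ : X₁ →L[ℂ] X₁) (E₃ : X₃ →L[ℂ] X₃) : X₁ × X₂ × X₃ → X₁ × X₂ × X₃ :=
  fun x => (E₁ x.1, 0, E₃ x.2.2)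

/-- The extended block operator `Q_ext (x₁, x₂, x₃) = (Q₁ x₁, Q₂ x₂, 0)`. -/
def Qext (Q₁ : X₁ →L[ℂ] X₁) (Q₂ : X₂ →L[ℂ] X₂) : X₁ × X₂ × X₃ → X₁ × X₂ × X₃ :=
  fun x => (Q₁ x.1, Q₂ x.2.1, 0)

/-- The pencil `s E - A Q` on its natural domain `{x : Q x ∈ D(A)}`. -/
def pencilApply {X : Type*} [NormedAddCommGroup X] [NormedSpace ℂ X]
    (s : ℂ) (E Q : X → X) (A : X →ₗ.[ℂ] X) (x : {x : X // Q x ∈ A.domain}) : X :=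
  s • E x.1 - A ⟨Q x.1, x.2⟩

/-- `s E - A Q` is boundedly invertible: it is a bijection from its domain onto `X`
with bounded inverse. -/
def PencilBddInv {X : Type*} [NormedAddCommGroup X] [NormedSpace ℂ X]
    (s : ℂ) (E Q : X → X) (A : X →ₗ.[ℂ] X) : Prop :=
  Function.Bijective (pencilApply s E Q A) ∧
    ∃ C : ℝ, 0 < C ∧ ∀ x : {x : X // Q x ∈ A.domain}, ‖x.1‖ ≤ C * ‖pencilApply s E Q A x‖

/-- The map `s E - A Q` of the reduced system on `X₁ × X₂`, where the reduced operator is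
`A (x₁, x₂) = (A₁ₑ (x₁,x₂,0), A₂ₑ (x₁,x₂,0))` with domain `{(x₁,x₂) : (x₁,x₂,0) ∈ D(A_ext)}`,
`E = diag(E₁,0)` and `Q = diag(Q₁,Q₂)`. -/
def redPencil (s : ℂ) (E₁ Q₁ : X₁ →L[ℂ] X₁) (Q₂ : X₂ →L[ℂ] X₂)
    (Aext : (X₁ × X₂ × X₃) →ₗ.[ℂ] (X₁ × X₂ × X₃))
    (x : {x : X₁ × X₂ // ((Q₁ x.1, Q₂ x.2, (0 : X₃)) : X₁ × X₂ × X₃) ∈ Aext.domain}) :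
    X₁ × X₂ :=
  s • ((E₁ x.1.1, (0 : X₂)) : X₁ × X₂) -
    ((Aext ⟨(Q₁ x.1.1, Q₂ x.1.2, 0), x.2⟩).1, (Aext ⟨(Q₁ x.1.1, Q₂ x.1.2, 0), x.2⟩).2.1)
/-- Each point `(x₁, x₂)` of the reduced domain lifts to `(x₁, x₂, x₃)`, with `x₃ = E₃⁻¹ (s⁻¹ A₃ₑ Q_ext x)`,
at which the extended pencil is the reduced one padded by zero. -/
lemma exists_lift (Aext : (X₁ × X₂ × X₃) →ₗ.[ℂ] (X₁ × X₂ × X₃))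
    (E₁ Q₁ : X₁ →L[ℂ] X₁) (Q₂ : X₂ →L[ℂ] X₂) (E₃ : X₃ ≃L[ℂ] X₃) (s : ℂ) (hs : s ≠ 0)
    (x : {x : X₁ × X₂ // ((Q₁ x.1, Q₂ x.2, (0 : X₃)) : X₁ × X₂ × X₃) ∈ Aext.domain}) :
    ∃ y : {y : X₁ × X₂ × X₃ // Qext Q₁ Q₂ y ∈ Aext.domain},
      y.1.1 = x.1.1 ∧ y.1.2.1 = x.1.2 ∧
      pencilApply s (Eext E₁ (E₃ : X₃ →L[ℂ] X₃)) (Qext Q₁ Q₂) Aext y =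
        ((redPencil s E₁ Q₁ Q₂ Aext x).1, (redPencil s E₁ Q₁ Q₂ Aext x).2, 0) := by
  refine ⟨⟨(x.1.1, x.1.2, E₃.symm (s⁻¹ • (Aext ⟨(Q₁ x.1.1, Q₂ x.1.2, 0), x.2⟩).2.2)), x.2⟩,
    rfl, rfl, ?_⟩
  refine Prod.ext ?_ (Prod.ext ?_ ?_)
  · simp [pencilApply, redPencil, Eext, Qext]
  · simp [pencilApply, redPencil, Eext, Qext]
  · simp [pencilApply, Eext, Qext, smul_smul, hs]

/-- Theorem `T:1`: reduction of a regular extended adHDAE. The reduced operator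
`A` is dissipative, and the reduced pencil `s E - A Q` is boundedly invertible (in particular
the pair `(E, AQ)` is regular). -/
theorem statement_0
    (Aext : (X₁ × X₂ × X₃) →ₗ.[ℂ] (X₁ × X₂ × X₃)) (hdiss : Dissipative3 Aext)
    (E₁ Q₁ : X₁ ≃L[ℂ] X₁) (Q₂ : X₂ ≃L[ℂ] X₂) (E₃ : X₃ ≃L[ℂ] X₃)
    (hcoer : Coercive ((ContinuousLinearMap.adjoint (E₁ : X₁ →L[ℂ] X₁)).comp
      (Q₁ : X₁ →L[ℂ] X₁)))
    (s : ℂ) (hs : 0 < s.re)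
    (hreg : PencilBddInv s (Eext (E₁ : X₁ →L[ℂ] X₁) (E₃ : X₃ →L[ℂ] X₃))
      (Qext (Q₁ : X₁ →L[ℂ] X₁) (Q₂ : X₂ →L[ℂ] X₂)) Aext) :
    -- the reduced operator `A` is dissipative on `X₁ × X₂`:
    (∀ (x₁ : X₁) (x₂ : X₂) (h : ((x₁, x₂, (0 : X₃)) : X₁ × X₂ × X₃) ∈ Aext.domain),
        (⟪(Aext ⟨(x₁, x₂, 0), h⟩).1, x₁⟫).re + (⟪(Aext ⟨(x₁, x₂, 0), h⟩).2.1, x₂⟫).re ≤ 0) ∧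
    -- the reduced pencil `s E - A Q` is boundedly invertible:
    (Function.Bijective
        (redPencil s (E₁ : X₁ →L[ℂ] X₁) (Q₁ : X₁ →L[ℂ] X₁) (Q₂ : X₂ →L[ℂ] X₂) Aext) ∧
      ∃ C : ℝ, 0 < C ∧
        ∀ x, ‖x.1‖ ≤
          C * ‖redPencil s (E₁ : X₁ →L[ℂ] X₁) (Q₁ : X₁ →L[ℂ] X₁) (Q₂ : X₂ →L[ℂ] X₂) Aext x‖) := by
  have hs0 : s ≠ 0 := by
    rintro rfl
    simp at hs
  obtain ⟨⟨hinj, hsurj⟩, C, hC, hbd⟩ := hreg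
  refine ⟨fun x₁ x₂ h => ?_, ⟨fun x x' hxx => ?_, fun f => ?_⟩, C, hC, fun x => ?_⟩
  · simpa [reInner3] using hdiss ⟨(x₁, x₂, 0), h⟩
  · obtain ⟨y, h1, h2, h3⟩ := exists_lift Aext E₁ Q₁ Q₂ E₃ s hs0 x
    obtain ⟨y', h1', h2', h3'⟩ := exists_lift Aext E₁ Q₁ Q₂ E₃ s hs0 x'
    have hyy : y = y' := hinj (by rw [h3, h3', hxx])
    subst hyy
    exact Subtype.ext (Prod.ext (h1.symm.trans h1') (h2.symm.trans h2'))
  · obtain ⟨y, hy⟩ := hsurj (f.1, f.2, 0)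
    refine ⟨⟨(y.1.1, y.1.2.1), y.2⟩, Prod.ext ?_ ?_⟩
    · simpa [pencilApply, redPencil, Eext, Qext] using congrArg (fun z => z.1) hy
    · simpa [pencilApply, redPencil, Eext, Qext] using congrArg (fun z => z.2.1) hy
  · obtain ⟨y, h1, h2, h3⟩ := exists_lift Aext E₁ Q₁ Q₂ E₃ s hs0 x
    have hb := hbd y
    rw [h3] at hb
    have hn : ∀ z : X₁ × X₂, ‖((z.1, z.2, (0 : X₃)) : X₁ × X₂ × X₃)‖ = ‖z‖ := fun z => by
      simp [Prod.norm_def]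
    rw [hn] at hb
    refine le_trans ?_ hb
    rw [Prod.norm_def, ← h1, ← h2]
    exact max_le (norm_fst_le y.1) ((norm_fst_le y.1.2).trans (norm_snd_le y.1))
end
end

section
/- Let X₁, X₂ be complex Hilbert spaces, X = X₁ × X₂, A a linear operator on X with domain D(A), E(x₁,x₂) = (E₁x₁, 0), Q(x₁,x₂) = (Q₁x₁, Q₂x₂) with E₁, Q₁, Q₂ bounded and boundedly invertible, and let E_Q denote the bounded operator E_Q(x₁,x₂) = (E₁Q₁⁻¹x₁, 0). Then for every s ∈ ℂ: the operator s·E − A∘Q (with domain {x : Qx ∈ D(A)}) is boundedly invertible if and only if the operator s·E_Q − A (with domain D(A)) is boundedly invertible. Furthermore, E₁*Q₁ is coercive if and only if E₁Q₁⁻¹ is coercive, if and only if Q₁E₁⁻¹ is coercive. -/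
/-!
The substitution `z = Q x` turns `s E - A Q` into `s E_Q - A`, because `E Q⁻¹ = E_Q` for block
diagonal `Q`; as `Q` is a linear homeomorphism, bijectivity and the norm bound are transported
in both directions (`pencilBddInv_iff_of_equiv`).

For coercivity, `S ↦ (R* S R)*` preserves coercivity whenever `R` is boundedly invertible
(`Coercive.of_congr`). The equivalences are the cases `(S, R) = (E₁* Q₁, Q₁⁻¹)`,
`(E₁ Q₁⁻¹, Q₁)`, `(E₁ Q₁⁻¹, Q₁ E₁⁻¹)` and `(Q₁ E₁⁻¹, E₁ Q₁⁻¹)`.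
-/

noncomputable section

open Complex ContinuousLinearMap
open scoped ComplexInnerProductSpace

variable {X₁ X₂ : Type*}
  [NormedAddCommGroup X₁] [InnerProductSpace ℂ X₁] [CompleteSpace X₁]
  [NormedAddCommGroup X₂] [InnerProductSpace ℂ X₂] [CompleteSpace X₂]

/-- `Re ⟨x, y⟩` on the Hilbert-space product `X₁ × X₂` (componentwise sum). -/
def reInner2 (x y : X₁ × X₂) : ℝ := (⟪x.1, y.1⟫).re + (⟪x.2, y.2⟫).re

/-- A (possibly unbounded) operator on the Hilbert space `X₁ × X₂` is dissipative if
`Re ⟨A x, x⟩ ≤ 0` for all `x` in its domain. -/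
def DissipativeProd (A : (X₁ × X₂) →ₗ.[ℂ] (X₁ × X₂)) : Prop :=
  ∀ x : A.domain, reInner2 (A x) (x : X₁ × X₂) ≤ 0

/-- Maximally dissipative: dissipative and `λ I - A` surjective for some `λ > 0`. -/
def MaxDissipativeProd (A : (X₁ × X₂) →ₗ.[ℂ] (X₁ × X₂)) : Prop :=
  DissipativeProd A ∧
    ∃ l : ℝ, 0 < l ∧ ∀ y : X₁ × X₂, ∃ x : A.domain, (l : ℂ) • (x : X₁ × X₂) - A x = y

/-- The block operator `E = diag(E₁, 0)`. -/
def blockE (E₁ : X₁ →L[ℂ] X₁) : X₁ × X₂ → X₁ × X₂ := fun x => (E₁ x.1, 0)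

/-- The block operator `Q = diag(Q₁, Q₂)`. -/
def blockQ (Q₁ : X₁ →L[ℂ] X₁) (Q₂ : X₂ →L[ℂ] X₂) : X₁ × X₂ → X₁ × X₂ :=
  fun x => (Q₁ x.1, Q₂ x.2)

/-- The substitution `z = Q x` for a linear homeomorphism `Q`: the pencil `s E - A Q` is boundedly
invertible iff `s F - A` is, where `F = E Q⁻¹`. -/
theorem pencilBddInv_iff_of_equiv {X : Type*} [NormedAddCommGroup X] [NormedSpace ℂ X]
    (s : ℂ) (E F Q : X → X) (A : X →ₗ.[ℂ] X) (e : X ≃L[ℂ] X)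
    (hQ : ∀ x, Q x = e x) (hF : ∀ x, F (e x) = E x) :
    PencilBddInv s E Q A ↔ PencilBddInv s F (fun x => x) A := by
  obtain rfl : Q = e := funext hQ
  let φ : {x : X // e x ∈ A.domain} ≃ {x : X // x ∈ A.domain} :=
    e.toEquiv.subtypeEquiv fun _ => Iff.rfl
  have hφ : ∀ x, ((φ x : {x : X // x ∈ A.domain}) : X) = e x.1 := fun _ => rfl
  have key : pencilApply s E e A = pencilApply s F (fun x => x) A ∘ φ := by
    funext x
    simp only [pencilApply, Function.comp_apply, hφ, hF]
  unfold PencilBddInv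
  rw [key]
  refine and_congr (φ.bijective_comp _) ⟨?_, ?_⟩
  · rintro ⟨C, hC, h⟩
    refine ⟨(‖(e : X →L[ℂ] X)‖ + 1) * C, by positivity, fun z => ?_⟩
    obtain ⟨x, rfl⟩ := φ.surjective z
    calc ‖e x.1‖ ≤ ‖(e : X →L[ℂ] X)‖ * ‖x.1‖ := (e : X →L[ℂ] X).le_opNorm x.1
      _ ≤ (‖(e : X →L[ℂ] X)‖ + 1) * ‖x.1‖ := by gcongr; linarith
      _ ≤ (‖(e : X →L[ℂ] X)‖ + 1) * (C * ‖pencilApply s F (fun x => x) A (φ x)‖) := by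
        gcongr; exact h x
      _ = _ := by ring
  · rintro ⟨C, hC, h⟩
    refine ⟨(‖(e.symm : X →L[ℂ] X)‖ + 1) * C, by positivity, fun x => ?_⟩
    calc ‖x.1‖ = ‖(e.symm : X →L[ℂ] X) (e x.1)‖ := by simp
      _ ≤ ‖(e.symm : X →L[ℂ] X)‖ * ‖e x.1‖ := (e.symm : X →L[ℂ] X).le_opNorm _
      _ ≤ (‖(e.symm : X →L[ℂ] X)‖ + 1) * ‖e x.1‖ := by gcongr; linarith
      _ ≤ (‖(e.symm : X →L[ℂ] X)‖ + 1) * (C * ‖pencilApply s F (fun x => x) A (φ x)‖) := by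
        gcongr; exact h (φ x)
      _ = _ := by simp only [Function.comp_apply]; ring

/-- Congruence by a boundedly invertible `R` preserves coercivity; the hypothesis says
`T* = R* S R`. -/
theorem Coercive.of_congr {X : Type*} [NormedAddCommGroup X] [InnerProductSpace ℂ X]
    [CompleteSpace X] {S T : X →L[ℂ] X} (hS : Coercive S) (R : X ≃L[ℂ] X)
    (h : ∀ x y, ⟪S (R x), R y⟫ = ⟪x, T y⟫) : Coercive T := by
  obtain ⟨hsa, c, hc, hb⟩ := hS
  have hsym := ContinuousLinearMap.isSelfAdjoint_iff_isSymmetric.1 hsa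
  have hT : ∀ x y, ⟪T x, y⟫ = ⟪x, T y⟫ := fun x y => by
    rw [← inner_conj_symm, ← h y x, inner_conj_symm, ← h x y]
    exact (hsym (R x) (R y)).symm
  refine ⟨ContinuousLinearMap.isSelfAdjoint_iff_isSymmetric.2 hT,
    c / (‖(R.symm : X →L[ℂ] X)‖ + 1) ^ 2, by positivity, fun x => ?_⟩
  have hx : ‖x‖ ≤ (‖(R.symm : X →L[ℂ] X)‖ + 1) * ‖R x‖ := by
    calc ‖x‖ = ‖(R.symm : X →L[ℂ] X) (R x)‖ := by simp
      _ ≤ ‖(R.symm : X →L[ℂ] X)‖ * ‖R x‖ := (R.symm : X →L[ℂ] X).le_opNorm _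
      _ ≤ _ := by gcongr; linarith
  rw [hT, ← h]
  refine le_trans ?_ (hb (R x))
  rw [div_mul_eq_mul_div, div_le_iff₀ (by positivity)]
  calc c * ‖x‖ ^ 2 ≤ c * ((‖(R.symm : X →L[ℂ] X)‖ + 1) * ‖R x‖) ^ 2 := by gcongr
    _ = _ := by ring

/-- Lemma `L:2.1`: with `E_Q = diag(E₁ Q₁⁻¹, 0)`, for every `s ∈ ℂ` the pencil
`s E - A Q` is boundedly invertible iff `s E_Q - A` (with domain `D(A)`) is, and the three
coercivity conditions are equivalent. -/
theorem statement_2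
    (A : (X₁ × X₂) →ₗ.[ℂ] (X₁ × X₂))
    (E₁ Q₁ : X₁ ≃L[ℂ] X₁) (Q₂ : X₂ ≃L[ℂ] X₂) :
    (∀ s : ℂ,
      PencilBddInv s (blockE (E₁ : X₁ →L[ℂ] X₁))
          (blockQ (Q₁ : X₁ →L[ℂ] X₁) (Q₂ : X₂ →L[ℂ] X₂)) A ↔
        PencilBddInv s (blockE ((E₁ : X₁ →L[ℂ] X₁).comp (Q₁.symm : X₁ →L[ℂ] X₁)))
          (fun x => x) A) ∧
    (Coercive ((ContinuousLinearMap.adjoint (E₁ : X₁ →L[ℂ] X₁)).comp (Q₁ : X₁ →L[ℂ] X₁)) ↔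
      Coercive ((E₁ : X₁ →L[ℂ] X₁).comp (Q₁.symm : X₁ →L[ℂ] X₁))) ∧
    (Coercive ((E₁ : X₁ →L[ℂ] X₁).comp (Q₁.symm : X₁ →L[ℂ] X₁)) ↔
      Coercive ((Q₁ : X₁ →L[ℂ] X₁).comp (E₁.symm : X₁ →L[ℂ] X₁))) := by
  refine ⟨fun s => pencilBddInv_iff_of_equiv s _ _ _ A (Q₁.prodCongr Q₂) (fun x => rfl)
    (fun x => by simp [blockE]), ⟨fun h => ?_, fun h => ?_⟩, ⟨fun h => ?_, fun h => ?_⟩⟩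
  · exact h.of_congr Q₁.symm fun x y => by simp [ContinuousLinearMap.adjoint_inner_left]
  · exact h.of_congr Q₁ fun x y => by simp [ContinuousLinearMap.adjoint_inner_right]
  · exact h.of_congr (E₁.symm.trans Q₁) fun x y => by simp
  · exact h.of_congr (Q₁.symm.trans E₁) fun x y => by simp
end
end

section
/- Let X₁, X₂ be complex Hilbert spaces, X = X₁ × X₂, and let A be a dissipative linear operator on X with domain D(A). Let E(x₁,x₂) = (E₁x₁, 0) and Q(x₁,x₂) = (Q₁x₁, Q₂x₂) with E₁, Q₁ : X₁ → X₁ and Q₂ : X₂ → X₂ bounded and boundedly invertible and E₁*Q₁ coercive. If there exists s ∈ ℂ with Re s > 0 such that s·E − A∘Q (with domain {x : Qx ∈ D(A)}) is boundedly invertible, then A is maximally dissipative, i.e., A is dissipative and λ·I − A is surjective onto X for some λ > 0. -/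
/-!
The substitution `z = Q x` turns the pencil `s E - A Q` into `P - A`, where
`P = s E Q⁻¹ = diag(s E₁ Q₁⁻¹, 0)`; thus `P - A` is onto and bounded below. Since `E₁* Q₁` is
self-adjoint and positive, `P` is accretive (`pencilBlock_accretive`). By a Neumann-type
perturbation (`surjective_of_small_perturbation`), `P + t - A` is still onto for some small
`t > 0`. For this fixed `t`, dissipativity of `A` makes all the operators `(1 - r) P + t - A`,
`0 ≤ r ≤ 1`, bounded below with the same constant (`norm_le_of_dissipative`), so the method of
continuity (`surjective_of_segment`) carries surjectivity from `r = 0` to `r = 1`, that is, to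
`t - A`.
-/

/-!
STATEMENT 3 (Lemma 2.2 / `L2.1a` in the paper): if the adHDAE pencil `s E - A Q` is
boundedly invertible for some `s` with `Re s > 0`, `A` dissipative, `E₁, Q₁, Q₂` bounded and
boundedly invertible with `E₁* Q₁` coercive, then `A` is maximally dissipative.
-/

noncomputable section

open Complex ContinuousLinearMap
open scoped ComplexInnerProductSpace

variable {X₁ X₂ : Type*}
  [NormedAddCommGroup X₁] [InnerProductSpace ℂ X₁] [CompleteSpace X₁]
  [NormedAddCommGroup X₂] [InnerProductSpace ℂ X₂] [CompleteSpace X₂]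

/-- One Neumann step: if `T - A` is onto and bounded below with constant `C`, then every
perturbation `T + S - A` is onto as long as `C * ‖S‖ < 1`, by Banach's fixed point theorem applied to
`w ↦ (T - A)⁻¹ (y - S w)`. -/
lemma surjective_of_small_perturbation {X : Type*} [NormedAddCommGroup X] [NormedSpace ℂ X]
    [CompleteSpace X] (A : X →ₗ.[ℂ] X) (T S : X →L[ℂ] X) (C : ℝ) (hC : 0 ≤ C)
    (hbd : ∀ x : A.domain, ‖(x : X)‖ ≤ C * ‖T x - A x‖)
    (hsurj : ∀ y : X, ∃ x : A.domain, T x - A x = y)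
    (hS : C * ‖S‖ < 1) (y : X) :
    ∃ x : A.domain, (T + S) x - A x = y := by
  choose R hR using hsurj
  let F : X → X := fun w => (R (y - S w) : X)
  have hF : ContractingWith (⟨C * ‖S‖, by positivity⟩ : NNReal) F := by
    refine ⟨by exact_mod_cast hS, LipschitzWith.of_dist_le_mul fun v w => ?_⟩
    rw [dist_eq_norm, dist_eq_norm]
    have h := hbd (R (y - S v) - R (y - S w))
    have e : T ((R (y - S v) - R (y - S w) : A.domain) : X) - A (R (y - S v) - R (y - S w))
        = S (w - v) := by
      rw [A.map_sub, Submodule.coe_sub, map_sub, map_sub]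
      calc _ = (T (R (y - S v)) - A (R (y - S v))) - (T (R (y - S w)) - A (R (y - S w))) := by
            abel
        _ = _ := by rw [hR, hR]; abel
    rw [e, Submodule.coe_sub] at h
    calc _ ≤ C * ‖S (w - v)‖ := h
      _ ≤ C * (‖S‖ * ‖w - v‖) := by gcongr; exact S.le_opNorm _
      _ = C * ‖S‖ * ‖v - w‖ := by rw [norm_sub_rev w v]; ring
  have hfix : F (ContractingWith.fixedPoint F hF) = ContractingWith.fixedPoint F hF :=
    hF.fixedPoint_isFixedPt
  set w := ContractingWith.fixedPoint F hF
  refine ⟨R (y - S w), ?_⟩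
  have h1 := hR (y - S w)
  have h2 : S ((R (y - S w) : A.domain) : X) = S w := congrArg S hfix
  rw [add_apply, h2, add_sub_right_comm, h1]
  abel

/-- Method of continuity: surjectivity propagates from `T - A` to `T + D - A` when the whole
segment between them is bounded below with the same constant. -/
lemma surjective_of_segment {X : Type*} [NormedAddCommGroup X] [NormedSpace ℂ X]
    [CompleteSpace X] (A : X →ₗ.[ℂ] X) (T D : X →L[ℂ] X) (C : ℝ) (hC : 0 ≤ C)
    (hbd : ∀ r : ℝ, 0 ≤ r → r ≤ 1 → ∀ x : A.domain,
      ‖(x : X)‖ ≤ C * ‖(T + (r : ℂ) • D) x - A x‖)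
    (hsurj : ∀ y : X, ∃ x : A.domain, T x - A x = y) (y : X) :
    ∃ x : A.domain, (T + D) x - A x = y := by
  obtain ⟨n, hn⟩ := exists_nat_gt (C * ‖D‖)
  have hn0 : (0 : ℝ) < n := lt_of_le_of_lt (by positivity) hn
  have key : ∀ k : ℕ, k ≤ n → ∀ y : X, ∃ x : A.domain,
      (T + (((k : ℝ) / n : ℝ) : ℂ) • D) x - A x = y := by
    intro k
    induction k with
    | zero => intro _ y; simpa using hsurj y
    | succ k ih =>
      intro hk y
      have hk' : (k : ℝ) ≤ n := by exact_mod_cast (Nat.le_of_succ_le hk)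
      have h := surjective_of_small_perturbation A (T + (((k : ℝ) / n : ℝ) : ℂ) • D)
        (((1 / n : ℝ) : ℂ) • D) C hC
        (hbd _ (by positivity) ((div_le_one hn0).2 hk')) (ih (Nat.le_of_succ_le hk))
        (by
          rw [norm_smul, Complex.norm_real, Real.norm_of_nonneg (by positivity)]
          rw [show C * (1 / n * ‖D‖) = C * ‖D‖ / n by ring]
          exact (div_lt_one hn0).2 hn) y
      have e : T + ((((k + 1 : ℕ) : ℝ) / n : ℝ) : ℂ) • D
          = T + (((k : ℝ) / n : ℝ) : ℂ) • D + ((1 / n : ℝ) : ℂ) • D := by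
        rw [add_assoc, ← add_smul, ← Complex.ofReal_add]
        congr 4
        push_cast
        ring
      rw [e]
      exact h
  simpa [hn0.ne'] using key n le_rfl y

/-- The Cauchy–Schwarz inequality for the Hilbert inner product, in the (equivalent) maximum norm
that `X₁ × X₂` carries; hence the factor `2`. -/
lemma reInner2_le (x y : X₁ × X₂) : reInner2 x y ≤ 2 * (‖x‖ * ‖y‖) := by
  have h1 : (⟪x.1, y.1⟫).re ≤ ‖x‖ * ‖y‖ :=
    (re_inner_le_norm (𝕜 := ℂ) x.1 y.1).trans
      (mul_le_mul (norm_fst_le x) (norm_fst_le y) (norm_nonneg _) (norm_nonneg _))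
  have h2 : (⟪x.2, y.2⟫).re ≤ ‖x‖ * ‖y‖ :=
    (re_inner_le_norm (𝕜 := ℂ) x.2 y.2).trans
      (mul_le_mul (norm_snd_le x) (norm_snd_le y) (norm_nonneg _) (norm_nonneg _))
  unfold reInner2
  linarith

lemma norm_sq_le_reInner2 (x : X₁ × X₂) : ‖x‖ ^ 2 ≤ reInner2 x x := by
  have h1 : (⟪x.1, x.1⟫).re = ‖x.1‖ ^ 2 := inner_self_eq_norm_sq (𝕜 := ℂ) x.1
  have h2 : (⟪x.2, x.2⟫).re = ‖x.2‖ ^ 2 := inner_self_eq_norm_sq (𝕜 := ℂ) x.2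
  rw [reInner2, h1, h2, Prod.norm_def]
  rcases max_choice ‖x.1‖ ‖x.2‖ with h | h <;> rw [h]
  · linarith [sq_nonneg ‖x.2‖]
  · linarith [sq_nonneg ‖x.1‖]

/-- If `A` is dissipative and `P` accretive, then `P + t - A` is bounded below, with a constant
that depends on `t` only. -/
lemma norm_le_of_dissipative (A : (X₁ × X₂) →ₗ.[ℂ] (X₁ × X₂)) (hA : DissipativeProd A)
    (P : (X₁ × X₂) →L[ℂ] (X₁ × X₂)) (hP : ∀ z, 0 ≤ reInner2 (P z) z) (t : ℝ) (ht : 0 < t)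
    (x : A.domain) :
    ‖(x : X₁ × X₂)‖ ≤ 2 / t * ‖P x + (t : ℂ) • (x : X₁ × X₂) - A x‖ := by
  set w := P x + (t : ℂ) • (x : X₁ × X₂) - A x with hw
  have e : reInner2 w x = reInner2 (P x) x + t * reInner2 (x : X₁ × X₂) x
      - reInner2 (A x) x := by
    simp only [hw, reInner2, Prod.fst_sub, Prod.snd_sub, Prod.fst_add, Prod.snd_add,
      Prod.smul_fst, Prod.smul_snd, inner_sub_left, inner_add_left, inner_smul_left,
      Complex.conj_ofReal, Complex.sub_re, Complex.add_re, Complex.re_ofReal_mul]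
    ring
  have h1 := hA x
  have h2 := hP x
  have h3 := mul_le_mul_of_nonneg_left (norm_sq_le_reInner2 (x : X₁ × X₂)) ht.le
  have h4 := reInner2_le w (x : X₁ × X₂)
  rcases (norm_nonneg (x : X₁ × X₂)).eq_or_lt with h0 | h0
  · rw [← h0]; positivity
  · rw [div_mul_eq_mul_div, le_div_iff₀ ht]
    have h5 : (‖(x : X₁ × X₂)‖ * t) * ‖(x : X₁ × X₂)‖ ≤ (2 * ‖w‖) * ‖(x : X₁ × X₂)‖ := by
      nlinarith
    exact le_of_mul_le_mul_right h5 h0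

/-- The operator `s E Q⁻¹ = diag(s E₁ Q₁⁻¹, 0)`. -/
def pencilBlock (s : ℂ) (E₁ Q₁ : X₁ ≃L[ℂ] X₁) : (X₁ × X₂) →L[ℂ] (X₁ × X₂) :=
  s • (ContinuousLinearMap.inl ℂ X₁ X₂ ∘L (E₁ : X₁ →L[ℂ] X₁) ∘L (Q₁.symm : X₁ →L[ℂ] X₁) ∘L
    ContinuousLinearMap.fst ℂ X₁ X₂)

lemma pencilBlock_apply (s : ℂ) (E₁ Q₁ : X₁ ≃L[ℂ] X₁) (z : X₁ × X₂) :
    pencilBlock s E₁ Q₁ z = s • ((E₁ (Q₁.symm z.1), 0) : X₁ × X₂) := by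
  simp [pencilBlock]

/-- `s E Q⁻¹` is accretive. With `u = Q₁⁻¹ z₁` the inner product `⟪E₁ u, Q₁ u⟫` is the quadratic
form of `E₁* Q₁`, which is real by self-adjointness and nonnegative by coercivity, so that only
the real part of `s` matters. -/
lemma pencilBlock_accretive (E₁ Q₁ : X₁ ≃L[ℂ] X₁)
    (hcoer : Coercive ((ContinuousLinearMap.adjoint (E₁ : X₁ →L[ℂ] X₁)).comp
      (Q₁ : X₁ →L[ℂ] X₁)))
    (s : ℂ) (hs : 0 < s.re) (z : X₁ × X₂) :
    0 ≤ reInner2 (pencilBlock s E₁ Q₁ z) z := by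
  obtain ⟨hsa, c, hc, hcx⟩ := hcoer
  set u := Q₁.symm z.1 with hu
  have hz : z.1 = Q₁ u := by simp [hu]
  have hpos : 0 ≤ (⟪Q₁ u, E₁ u⟫).re := by
    have h := hcx u
    rw [ContinuousLinearMap.comp_apply, ContinuousLinearMap.adjoint_inner_left] at h
    exact le_trans (by positivity) h
  have hsymm : ⟪E₁ u, Q₁ u⟫ = ⟪Q₁ u, E₁ u⟫ := by
    have h := hsa.isSymmetric u u
    simp only [ContinuousLinearMap.coe_coe, ContinuousLinearMap.comp_apply,
      ContinuousLinearMap.adjoint_inner_left, ContinuousLinearMap.adjoint_inner_right] at h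
    exact h.symm
  have him : (⟪Q₁ u, E₁ u⟫).im = 0 := by
    have h := inner_conj_symm (𝕜 := ℂ) (Q₁ u) (E₁ u)
    rw [hsymm] at h
    exact Complex.conj_eq_iff_im.1 h
  rw [pencilBlock_apply, reInner2]
  simp only [Prod.smul_fst, Prod.smul_snd, smul_zero, inner_zero_left, Complex.zero_re, add_zero,
    inner_smul_left]
  rw [← hu, hz, hsymm, Complex.mul_re, him]
  simp only [Complex.conj_re, mul_zero, sub_zero]
  positivity

theorem statement_3
    (A : (X₁ × X₂) →ₗ.[ℂ] (X₁ × X₂)) (hA : DissipativeProd A)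
    (E₁ Q₁ : X₁ ≃L[ℂ] X₁) (Q₂ : X₂ ≃L[ℂ] X₂)
    (hcoer : Coercive ((ContinuousLinearMap.adjoint (E₁ : X₁ →L[ℂ] X₁)).comp
      (Q₁ : X₁ →L[ℂ] X₁)))
    (s : ℂ) (hs : 0 < s.re)
    (hreg : PencilBddInv s (blockE (E₁ : X₁ →L[ℂ] X₁))
      (blockQ (Q₁ : X₁ →L[ℂ] X₁) (Q₂ : X₂ →L[ℂ] X₂)) A) :
    MaxDissipativeProd A := by
  -- Substituting `z = Q x` turns `s E - A Q` into `P - A` on the domain of `A`.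
  obtain ⟨⟨-, hsurj⟩, C, hC, hbd⟩ := hreg
  set P : (X₁ × X₂) →L[ℂ] (X₁ × X₂) := pencilBlock s E₁ Q₁ with hPdef
  have hP : ∀ z, 0 ≤ reInner2 (P z) z := pencilBlock_accretive E₁ Q₁ hcoer s hs
  have hsurjP : ∀ y, ∃ z : A.domain, P z - A z = y := by
    intro y
    obtain ⟨x, hx⟩ := hsurj y
    refine ⟨⟨_, x.2⟩, ?_⟩
    rw [← hx, hPdef, pencilBlock_apply]
    simp [pencilApply, blockE, blockQ]
  let Q : (X₁ × X₂) →L[ℂ] (X₁ × X₂) := (Q₁ : X₁ →L[ℂ] X₁).prodMap (Q₂ : X₂ →L[ℂ] X₂)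
  have hbdP : ∀ z : A.domain, ‖(z : X₁ × X₂)‖ ≤ (‖Q‖ * C) * ‖P z - A z‖ := by
    intro z
    have hz : blockQ (Q₁ : X₁ →L[ℂ] X₁) (Q₂ : X₂ →L[ℂ] X₂)
        (Q₁.symm (z : X₁ × X₂).1, Q₂.symm (z : X₁ × X₂).2) = z := by
      simp [blockQ]
    have hmem : blockQ (Q₁ : X₁ →L[ℂ] X₁) (Q₂ : X₂ →L[ℂ] X₂)
        (Q₁.symm (z : X₁ × X₂).1, Q₂.symm (z : X₁ × X₂).2) ∈ A.domain := by
      rw [hz]; exact z.2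
    have h := hbd ⟨(Q₁.symm (z : X₁ × X₂).1, Q₂.symm (z : X₁ × X₂).2), hmem⟩
    have e : pencilApply s (blockE (E₁ : X₁ →L[ℂ] X₁))
        (blockQ (Q₁ : X₁ →L[ℂ] X₁) (Q₂ : X₂ →L[ℂ] X₂)) A
        ⟨(Q₁.symm (z : X₁ × X₂).1, Q₂.symm (z : X₁ × X₂).2), hmem⟩ = P z - A z := by
      rw [hPdef, pencilBlock_apply, pencilApply]
      congr 2
      exact Subtype.ext hz
    rw [e] at h
    have h2 := Q.le_opNorm (Q₁.symm (z : X₁ × X₂).1, Q₂.symm (z : X₁ × X₂).2)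
    have hQz : Q (Q₁.symm (z : X₁ × X₂).1, Q₂.symm (z : X₁ × X₂).2) = z := hz
    rw [hQz] at h2
    calc _ ≤ _ := h2
      _ ≤ ‖Q‖ * (C * ‖P z - A z‖) := by gcongr
      _ = _ := by ring
  set K := ‖Q‖ * C with hK
  have hK0 : 0 ≤ K := by positivity
  -- `t` is chosen with `K * t < 1`, so that adding `t • 1` is a small perturbation of `P - A`.
  let t : ℝ := 1 / (K + 1)
  have ht : 0 < t := by positivity
  have hKt : K * t < 1 := by
    change K * (1 / (K + 1)) < 1
    rw [mul_one_div, div_lt_one (by positivity)]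
    linarith
  let J : (X₁ × X₂) →L[ℂ] (X₁ × X₂) := (t : ℂ) • ContinuousLinearMap.id ℂ (X₁ × X₂)
  have hJ : ‖J‖ ≤ t := by
    refine ContinuousLinearMap.opNorm_le_bound _ ht.le fun x => ?_
    simp [J, norm_smul, abs_of_pos ht]
  have h1 : ∀ y, ∃ z : A.domain, (P + J) z - A z = y :=
    surjective_of_small_perturbation A P J K hK0 hbdP hsurjP
      (lt_of_le_of_lt (mul_le_mul_of_nonneg_left hJ hK0) hKt)
  have h2 := surjective_of_segment A (P + J) (-P) (2 / t) (by positivity) ?_ h1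
  · refine ⟨hA, t, ht, fun y => ?_⟩
    obtain ⟨x, hx⟩ := h2 y
    refine ⟨x, ?_⟩
    rw [← hx]
    simp [J]
  -- On the segment the operator is `(1 - r) P + t - A`, with `(1 - r) P` still accretive.
  · intro r hr0 hr1 x
    have h := norm_le_of_dissipative A hA (((1 - r : ℝ) : ℂ) • P) (fun z => ?_) t ht x
    · have e : (P + J + (r : ℂ) • -P) x
          = (((1 - r : ℝ) : ℂ) • P) x + (t : ℂ) • (x : X₁ × X₂) := by
        simp only [J, add_apply, smul_apply, neg_apply, ContinuousLinearMap.id_apply,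
          Complex.ofReal_sub, Complex.ofReal_one]
        module
      rw [e]
      exact h
    · have e : reInner2 ((((1 - r : ℝ) : ℂ) • P) z) z = (1 - r) * reInner2 (P z) z := by
        simp only [reInner2, smul_apply, Prod.smul_fst, Prod.smul_snd, inner_smul_left,
          Complex.conj_ofReal, Complex.re_ofReal_mul]
        ring
      rw [e]
      exact mul_nonneg (by linarith) (hP z)
end
end

section
/- Let X₁, X₂ be complex Hilbert spaces, X = X₁ × X₂, A a dissipative linear operator on X with domain D(A), E(x₁,x₂) = (E₁x₁, 0), Q(x₁,x₂) = (Q₁x₁, Q₂x₂) with E₁, Q₁, Q₂ bounded and boundedly invertible and E₁*Q₁ coercive. If there exists s₀ ∈ ℂ with Re s₀ > 0 such that s₀·E − A∘Q (with domain {x : Qx ∈ D(A)}) is boundedly invertible, then for every s ∈ ℂ with Re s > 0 the operator s·E − A∘Q is boundedly invertible. -/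
/-!
Write `E = diag(E₁, 0)`, `Q = diag(Q₁, Q₂)`, `R = (s₀ E - A Q)⁻¹`, `a = Re s₀`, `μ = s - s₀` and
let `K : X₁ → X₁`, `K z = (R (E₁ z, 0))₁`. Since `s E - A Q = (s₀ E - A Q) + μ E` and `E` only sees
the first component, `s E - A Q` is boundedly invertible as soon as `1 + μ K` is.

Let `H = E₁* Q₁` and let `q z = Re ⟨H z, z⟩` be the energy, the square of a norm equivalent to that
of `X₁`. Testing `(s₀ E - A Q) w = (E₁ z, 0)` with `Q w` and using dissipativity gives
`a q(K z) ≤ Re ⟨H z, K z⟩`, which says exactly that the Cayley-type transform `T = 2 a K - 1` is a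
contraction for `q`. Hence the powers of `T` are uniformly bounded and `T` has its spectrum in the
closed unit disc. Up to a nonzero scalar `1 + μ K` is `l - T` with `l = -(2 a + μ) / μ`, and
`|l| > 1` amounts to `Re s > 0`; so all `s` in the half plane are reached in one step.
-/


noncomputable section

open Complex ContinuousLinearMap
open scoped ComplexInnerProductSpace

variable {X₁ X₂ : Type*}
  [NormedAddCommGroup X₁] [InnerProductSpace ℂ X₁] [CompleteSpace X₁]
  [NormedAddCommGroup X₂] [InnerProductSpace ℂ X₂] [CompleteSpace X₂]

section Helpers

variable {X : Type*} [NormedAddCommGroup X] [InnerProductSpace ℂ X] [CompleteSpace X]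

/-- An operator that does not increase a coercive energy has uniformly bounded powers, so its
spectrum lies in the closed unit disc. -/
lemma isUnit_algebraMap_sub_of_energy_le (H T : X →L[ℂ] X) (c : ℝ) (hc : 0 < c)
    (hH : ∀ x : X, c * ‖x‖ ^ 2 ≤ (⟪H x, x⟫).re)
    (hT : ∀ z : X, (⟪H (T z), T z⟫).re ≤ (⟪H z, z⟫).re) (l : ℂ) (hl : 1 < ‖l‖) :
    IsUnit (algebraMap ℂ (X →L[ℂ] X) l - T) := by
  have hpow : ∀ (n : ℕ) (z : X), (⟪H ((T ^ n) z), (T ^ n) z⟫).re ≤ (⟪H z, z⟫).re := by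
    intro n
    induction n with
    | zero => intro z; simp
    | succ k ih =>
      intro z
      rw [pow_succ]
      exact (ih (T z)).trans (hT z)
  have hbd : ∀ n : ℕ, ‖T ^ n‖ ≤ √(‖H‖ / c) := by
    intro n
    refine ContinuousLinearMap.opNorm_le_bound _ (Real.sqrt_nonneg _) fun z => ?_
    have h1 : (⟪H z, z⟫).re ≤ ‖H‖ * ‖z‖ ^ 2 := by
      calc (⟪H z, z⟫).re ≤ ‖H z‖ * ‖z‖ := re_inner_le_norm (𝕜 := ℂ) _ _
        _ ≤ ‖H‖ * ‖z‖ * ‖z‖ := by gcongr; exact H.le_opNorm z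
        _ = _ := by ring
    have h2 := (hH ((T ^ n) z)).trans ((hpow n z).trans h1)
    refine abs_le_of_sq_le_sq' ?_ (by positivity) |>.2
    rw [mul_pow, Real.sq_sqrt (by positivity), div_mul_eq_mul_div, le_div_iff₀ hc]
    linarith
  by_contra hnot
  have hmem : l ∈ spectrum ℂ T := hnot
  obtain ⟨n, hn⟩ := pow_unbounded_of_one_lt (√(‖H‖ / c) * ‖(1 : X →L[ℂ] X)‖) hl
  have h1 : ‖l ^ n‖ ≤ ‖T ^ n‖ * ‖(1 : X →L[ℂ] X)‖ :=
    spectrum.norm_le_norm_mul_of_mem (spectrum.pow_mem_pow T n hmem)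
  rw [norm_pow] at h1
  have h2 := mul_le_mul_of_nonneg_right (hbd n) (norm_nonneg (1 : X →L[ℂ] X))
  linarith

lemma one_lt_norm_neg_div (a : ℝ) (ha : 0 < a) (m : ℂ) (hm : m ≠ 0) (h : 0 < m.re + a) :
    1 < ‖-(2 * a + m) / m‖ := by
  rw [norm_div, norm_neg, one_lt_div (norm_pos_iff.2 hm)]
  refine lt_of_pow_lt_pow_left₀ 2 (norm_nonneg _) ?_
  rw [← Complex.normSq_eq_norm_sq, ← Complex.normSq_eq_norm_sq, Complex.normSq_apply,
    Complex.normSq_apply]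
  simp
  nlinarith [mul_pos ha h]

/-- If `a q(K z) ≤ Re ⟨H z, K z⟩` for the energy `q z = Re ⟨H z, z⟩`, then `2 a K - 1` is a
contraction for `q`, and `1 + m K` is invertible whenever `Re m > -a`. -/
lemma isUnit_one_add_smul (H K : X →L[ℂ] X) (hH : Coercive H) (a : ℝ) (ha : 0 < a)
    (hK : ∀ z : X, a * (⟪H (K z), K z⟫).re ≤ (⟪H z, K z⟫).re)
    (m : ℂ) (hm : m ≠ 0) (h : 0 < m.re + a) :
    IsUnit (1 + m • K) := by
  obtain ⟨hsa, c, hc, hcoer⟩ := hH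
  have hunit := isUnit_algebraMap_sub_of_energy_le H ((2 * a : ℂ) • K - 1) c hc hcoer
    (by
      intro z
      have hsym : (⟪H (K z), z⟫).re = (⟪H z, K z⟫).re := by
        have h1 : ⟪H (K z), z⟫ = ⟪K z, H z⟫ := hsa.isSymmetric (K z) z
        rw [h1]
        exact inner_re_symm (𝕜 := ℂ) _ _
      have hk := hK z
      simp only [_root_.sub_apply, _root_.smul_apply,
        one_apply_eq_self, map_sub, map_smul, inner_sub_left, inner_sub_right,
        inner_smul_left, inner_smul_right]
      simp
      rw [hsym]
      nlinarith [mul_le_mul_of_nonneg_left hk ha.le])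
    _ (one_lt_norm_neg_div a ha m hm h)
  have ha' : (a : ℂ) ≠ 0 := by exact_mod_cast ha.ne'
  have hne : -(m / (2 * a)) ≠ 0 := neg_ne_zero.2 (div_ne_zero hm (by simpa using ha'))
  have heq : 1 + m • K = -(m / (2 * a)) •
      (algebraMap ℂ (X →L[ℂ] X) (-(2 * a + m) / m) - ((2 * a : ℂ) • K - 1)) := by
    rw [Algebra.algebraMap_eq_smul_one]
    match_scalars
    · field_simp
      ring
    · field_simp
  rw [heq]
  exact hunit.smul (Units.mk0 _ hne)

end Helpers

/-- The inverse of a boundedly invertible pencil, as a bounded operator. -/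
lemma exists_resolvent {X : Type*} [NormedAddCommGroup X] [NormedSpace ℂ X]
    (s : ℂ) (E Q : X →L[ℂ] X) (A : X →ₗ.[ℂ] X) (h : PencilBddInv s E Q A) :
    ∃ R : X →L[ℂ] X, (∀ y, ∃ hy : Q (R y) ∈ A.domain, pencilApply s E Q A ⟨R y, hy⟩ = y) ∧
      ∀ x, R (pencilApply s E Q A x) = x.1 := by
  obtain ⟨hbij, C, hC, hb⟩ := h
  have hadd : ∀ x y : {x : X // Q x ∈ A.domain}, ∃ h : Q (x.1 + y.1) ∈ A.domain,
      pencilApply s E Q A ⟨x.1 + y.1, h⟩ = pencilApply s E Q A x + pencilApply s E Q A y := by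
    intro x y
    refine ⟨by rw [map_add]; exact A.domain.add_mem x.2 y.2, ?_⟩
    have h1 := A.map_add ⟨Q x.1, x.2⟩ ⟨Q y.1, y.2⟩
    simp only [pencilApply, map_add, smul_add]
    simp only [AddMemClass.mk_add_mk] at h1
    rw [h1]
    abel
  have hsmul : ∀ (k : ℂ) (x : {x : X // Q x ∈ A.domain}), ∃ h : Q (k • x.1) ∈ A.domain,
      pencilApply s E Q A ⟨k • x.1, h⟩ = k • pencilApply s E Q A x := by
    intro k x
    refine ⟨by rw [map_smul]; exact A.domain.smul_mem k x.2, ?_⟩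
    have h1 := A.map_smul k ⟨Q x.1, x.2⟩
    simp only [pencilApply, map_smul, smul_sub]
    simp only [SetLike.mk_smul_mk] at h1
    rw [h1, smul_comm]
  choose g hg using hbij.2
  have hleft : ∀ x, g (pencilApply s E Q A x) = x := fun x => hbij.1 (hg _)
  let L : X →ₗ[ℂ] X :=
    { toFun := fun y => (g y).1
      map_add' := by
        intro y z
        obtain ⟨h, he⟩ := hadd (g y) (g z)
        rw [hg, hg] at he
        rw [← he, hleft]
      map_smul' := by
        intro k y
        obtain ⟨h, he⟩ := hsmul k (g y)
        rw [hg] at he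
        rw [← he, hleft]
        rfl }
  refine ⟨L.mkContinuous C fun y => ?_, fun y => ⟨(g y).2, hg y⟩, fun x => ?_⟩
  · have := hb (g y)
    rwa [hg] at this
  · exact congrArg Subtype.val (hleft x)

/-- part of Theorem `t_commonQI`: if `s₀ E - A Q` is boundedly invertible for one
`s₀` in the open right half plane, it is boundedly invertible for all such `s`. -/
theorem statement_4
    (A : (X₁ × X₂) →ₗ.[ℂ] (X₁ × X₂)) (hA : DissipativeProd A)
    (E₁ Q₁ : X₁ ≃L[ℂ] X₁) (Q₂ : X₂ ≃L[ℂ] X₂)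
    (hcoer : Coercive ((ContinuousLinearMap.adjoint (E₁ : X₁ →L[ℂ] X₁)).comp
      (Q₁ : X₁ →L[ℂ] X₁)))
    (s₀ : ℂ) (hs₀ : 0 < s₀.re)
    (hreg : PencilBddInv s₀ (blockE (E₁ : X₁ →L[ℂ] X₁))
      (blockQ (Q₁ : X₁ →L[ℂ] X₁) (Q₂ : X₂ →L[ℂ] X₂)) A) :
    ∀ s : ℂ, 0 < s.re →
      PencilBddInv s (blockE (E₁ : X₁ →L[ℂ] X₁))
        (blockQ (Q₁ : X₁ →L[ℂ] X₁) (Q₂ : X₂ →L[ℂ] X₂)) A := by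
  intro s hs
  by_cases hne : s = s₀
  · rw [hne]
    exact hreg
  have hm : s - s₀ ≠ 0 := sub_ne_zero.2 hne
  let E : (X₁ × X₂) →L[ℂ] (X₁ × X₂) :=
    (ContinuousLinearMap.inl ℂ X₁ X₂).comp
      ((E₁ : X₁ →L[ℂ] X₁).comp (ContinuousLinearMap.fst ℂ X₁ X₂))
  let Q : (X₁ × X₂) →L[ℂ] (X₁ × X₂) :=
    (Q₁ : X₁ →L[ℂ] X₁).prodMap (Q₂ : X₂ →L[ℂ] X₂)
  change PencilBddInv s₀ E Q A at hreg
  change PencilBddInv s E Q A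
  obtain ⟨R, hR, hRl⟩ := exists_resolvent s₀ E Q A hreg
  let K : X₁ →L[ℂ] X₁ := (ContinuousLinearMap.fst ℂ X₁ X₂).comp
    (R.comp ((ContinuousLinearMap.inl ℂ X₁ X₂).comp (E₁ : X₁ →L[ℂ] X₁)))
  have hKE : ∀ x : X₁ × X₂, (R (E x)).1 = K x.1 := fun x => rfl
  have hK : ∀ z : X₁, s₀.re * (⟪((ContinuousLinearMap.adjoint (E₁ : X₁ →L[ℂ] X₁)).comp
      (Q₁ : X₁ →L[ℂ] X₁)) (K z), K z⟫).re ≤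
      (⟪((ContinuousLinearMap.adjoint (E₁ : X₁ →L[ℂ] X₁)).comp
      (Q₁ : X₁ →L[ℂ] X₁)) z, K z⟫).re := by
    intro z
    have hsym := hcoer.1.isSymmetric
    obtain ⟨hy, he⟩ := hR (E (z, 0))
    have hd := hA ⟨Q (R (E (z, 0))), hy⟩
    have hAe : A ⟨Q (R (E (z, 0))), hy⟩ = s₀ • E (R (E (z, 0))) - E (z, 0) := by
      rw [eq_sub_iff_add_eq, add_comm]
      exact (sub_eq_iff_eq_add.1 he).symm
    rw [hAe] at hd
    have h1 : (s₀ • E (R (E (z, 0))) - E (z, 0)).1 = s₀ • E₁ (K z) - E₁ z := rfl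
    have h2 : (s₀ • E (R (E (z, 0))) - E (z, 0)).2 = 0 := by simp [E]
    have h3 : (Q (R (E (z, 0)))).1 = Q₁ (K z) := rfl
    simp only [reInner2, h1, h2, h3, inner_zero_left, Complex.zero_re, add_zero, inner_sub_left,
      inner_smul_left, Complex.sub_re, Complex.mul_re, Complex.conj_re, Complex.conj_im] at hd
    have e1 : ⟪E₁ (K z), Q₁ (K z)⟫ = ⟪((ContinuousLinearMap.adjoint (E₁ : X₁ →L[ℂ] X₁)).comp
        (Q₁ : X₁ →L[ℂ] X₁)) (K z), K z⟫ := by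
      refine Eq.trans ?_ (hsym (K z) (K z)).symm
      simp [ContinuousLinearMap.adjoint_inner_right]
    have e2 : ⟪E₁ z, Q₁ (K z)⟫ = ⟪((ContinuousLinearMap.adjoint (E₁ : X₁ →L[ℂ] X₁)).comp
        (Q₁ : X₁ →L[ℂ] X₁)) z, K z⟫ := by
      refine Eq.trans ?_ (hsym z (K z)).symm
      simp [ContinuousLinearMap.adjoint_inner_right]
    -- self-adjointness of `E₁* Q₁` makes the energy real, so `Im s₀` does not contribute
    have him : (⟪((ContinuousLinearMap.adjoint (E₁ : X₁ →L[ℂ] X₁)).comp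
        (Q₁ : X₁ →L[ℂ] X₁)) (K z), K z⟫).im = 0 :=
      hsym.im_inner_apply_self (K z)
    rw [e1, e2, him] at hd
    linarith
  obtain ⟨u, hu⟩ := isUnit_one_add_smul _ K hcoer s₀.re hs₀ hK (s - s₀) hm (by simpa using hs)
  let J : X₁ →L[ℂ] X₁ := ↑u⁻¹
  have hJl : ∀ z, J (z + (s - s₀) • K z) = z := by
    intro z
    have h := congrArg (fun f : X₁ →L[ℂ] X₁ => f z) u.inv_mul
    rw [hu] at h
    exact h
  have hJr : ∀ z, J z + (s - s₀) • K (J z) = z := by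
    intro z
    have h := congrArg (fun f : X₁ →L[ℂ] X₁ => f z) u.mul_inv
    rw [hu] at h
    exact h
  have hshift : ∀ x, pencilApply s E Q A x = pencilApply s₀ E Q A x + (s - s₀) • E x.1 := by
    intro x
    simp only [pencilApply, sub_smul]
    abel
  have hx : ∀ x, x.1 = R (pencilApply s E Q A x) - (s - s₀) • R (E x.1) := by
    intro x
    rw [hshift, map_add, hRl, map_smul]
    abel
  have hx1 : ∀ x, x.1.1 = J (R (pencilApply s E Q A x)).1 := by
    intro x
    have h := congrArg Prod.fst (hx x)
    rw [Prod.fst_sub, Prod.smul_fst, hKE, eq_sub_iff_add_eq] at h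
    rw [← h, hJl]
  -- `E x` depends on `x.1` only, so `hx` and `hx1` express `x` through the image of `x`
  let S : (X₁ × X₂) →L[ℂ] (X₁ × X₂) := R - (s - s₀) • R.comp
    ((ContinuousLinearMap.inl ℂ X₁ X₂).comp ((E₁ : X₁ →L[ℂ] X₁).comp
      (J.comp ((ContinuousLinearMap.fst ℂ X₁ X₂).comp R))))
  have hSapp : ∀ y, S y = R y - (s - s₀) • R (E (J (R y).1, 0)) := fun y => rfl
  have hS : ∀ x, x.1 = S (pencilApply s E Q A x) := by
    intro x
    have hE : E x.1 = E (x.1.1, 0) := rfl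
    rw [hSapp, ← hx1, ← hE]
    exact hx x
  refine ⟨⟨fun x x' h => ?_, fun y => ?_⟩, ‖S‖ + 1, by positivity, fun x => ?_⟩
  · apply Subtype.ext
    rw [hS x, hS x', h]
  · obtain ⟨hy, he⟩ := hR (y - (s - s₀) • E (J (R y).1, 0))
    refine ⟨⟨_, hy⟩, ?_⟩
    have hfst : (R (y - (s - s₀) • E (J (R y).1, 0))).1 = J (R y).1 := by
      rw [map_sub, map_smul, Prod.fst_sub, Prod.smul_fst, hKE, sub_eq_iff_eq_add]
      exact (hJr _).symm
    have hE : E (R (y - (s - s₀) • E (J (R y).1, 0))) = E (J (R y).1, 0) :=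
      congrArg (fun t : X₁ => E (t, 0)) hfst
    rw [hshift, he, hE]
    abel
  · calc ‖x.1‖ = ‖S (pencilApply s E Q A x)‖ := congrArg norm (hS x)
      _ ≤ ‖S‖ * ‖pencilApply s E Q A x‖ := S.le_opNorm _
      _ ≤ (‖S‖ + 1) * ‖pencilApply s E Q A x‖ := by gcongr; linarith
end
end

section
/- Let X₁, X₂ be complex Hilbert spaces, X = X₁ × X₂, A a linear operator on X with domain D(A), E(x₁,x₂) = (E₁x₁, 0), Q(x₁,x₂) = (Q₁x₁, Q₂x₂) with E₁, Q₁, Q₂ bounded and boundedly invertible and E₁*Q₁ coercive. Suppose A is maximally dissipative and the pair (E, AQ) is regular, i.e., s·E − A∘Q is boundedly invertible for some s with Re s > 0. Then there exists m₁ > 0 such that for all x ∈ X with Qx ∈ D(A) one has ‖E x‖² + ‖A(Q x)‖² ≥ m₁²‖x‖². -/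
/-!
The bounded inverse of the pencil `s E - A Q` gives `‖x‖ ≤ C ‖s E x - A (Q x)‖`. The triangle
inequality bounds the right side by `C (‖s‖ ‖E x‖ + ‖A (Q x)‖)`, and squaring with the
Cauchy-Schwarz inequality yields the claim with `m₁ = (C (‖s‖ + 1))⁻¹`.
-/

noncomputable section

open Complex ContinuousLinearMap
open scoped ComplexInnerProductSpace

variable {X₁ X₂ : Type*}
  [NormedAddCommGroup X₁] [InnerProductSpace ℂ X₁] [CompleteSpace X₁]
  [NormedAddCommGroup X₂] [InnerProductSpace ℂ X₂] [CompleteSpace X₂]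

/-- Theorem `t_commonQI`, (i) ⇒ (iv): if `A` is maximally dissipative and the pair
`(E, AQ)` is regular then `‖E x‖² + ‖A Q x‖² ≥ m₁² ‖x‖²` on `{x : Q x ∈ D(A)}`. -/
theorem statement_5
    (A : (X₁ × X₂) →ₗ.[ℂ] (X₁ × X₂))
    (E₁ Q₁ : X₁ ≃L[ℂ] X₁) (Q₂ : X₂ ≃L[ℂ] X₂)
    (hcoer : Coercive ((ContinuousLinearMap.adjoint (E₁ : X₁ →L[ℂ] X₁)).comp
      (Q₁ : X₁ →L[ℂ] X₁)))
    (hmax : MaxDissipativeProd A)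
    (hreg : ∃ s : ℂ, 0 < s.re ∧ PencilBddInv s (blockE (E₁ : X₁ →L[ℂ] X₁))
      (blockQ (Q₁ : X₁ →L[ℂ] X₁) (Q₂ : X₂ →L[ℂ] X₂)) A) :
    ∃ m₁ : ℝ, 0 < m₁ ∧
      ∀ (x : X₁ × X₂) (h : blockQ (Q₁ : X₁ →L[ℂ] X₁) (Q₂ : X₂ →L[ℂ] X₂) x ∈ A.domain),
        m₁ ^ 2 * ‖x‖ ^ 2 ≤ ‖blockE (E₁ : X₁ →L[ℂ] X₁) x‖ ^ 2 +
          ‖A ⟨blockQ (Q₁ : X₁ →L[ℂ] X₁) (Q₂ : X₂ →L[ℂ] X₂) x, h⟩‖ ^ 2 := by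
  obtain ⟨s, -, -, C, hC, hbound⟩ := hreg
  -- With `K = C (‖s‖ + 1)`, Cauchy-Schwarz gives `(C (‖s‖ a + b))² ≤ K² (a² + b²)`.
  have hK : 0 < C * (‖s‖ + 1) := by positivity
  refine ⟨(C * (‖s‖ + 1))⁻¹, inv_pos.mpr hK, fun x h => ?_⟩
  have hx := hbound ⟨x, h⟩
  simp only [pencilApply] at hx
  set e := blockE (X₂ := X₂) (E₁ : X₁ →L[ℂ] X₁) x
  set a := A ⟨blockQ (Q₁ : X₁ →L[ℂ] X₁) (Q₂ : X₂ →L[ℂ] X₂) x, h⟩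
  have hnorm : ‖s • e - a‖ ≤ ‖s‖ * ‖e‖ + ‖a‖ :=
    (norm_sub_le _ _).trans_eq (by rw [norm_smul])
  have hx' : ‖x‖ ≤ C * (‖s‖ * ‖e‖ + ‖a‖) :=
    hx.trans (mul_le_mul_of_nonneg_left hnorm hC.le)
  have hcs : (‖s‖ * ‖e‖ + ‖a‖) ^ 2 ≤ (‖s‖ + 1) ^ 2 * (‖e‖ ^ 2 + ‖a‖ ^ 2) := by
    have : 0 ≤ 2 * ‖s‖ * (‖e‖ ^ 2 + ‖a‖ ^ 2) := by positivity
    nlinarith [sq_nonneg (‖s‖ * ‖a‖ - ‖e‖)]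
  rw [inv_pow, inv_mul_le_iff₀ (pow_pos hK 2)]
  calc ‖x‖ ^ 2 ≤ (C * (‖s‖ * ‖e‖ + ‖a‖)) ^ 2 := pow_le_pow_left₀ (norm_nonneg _) hx' 2
    _ = C ^ 2 * (‖s‖ * ‖e‖ + ‖a‖) ^ 2 := mul_pow _ _ _
    _ ≤ C ^ 2 * ((‖s‖ + 1) ^ 2 * (‖e‖ ^ 2 + ‖a‖ ^ 2)) :=
      mul_le_mul_of_nonneg_left hcs (sq_nonneg C)
    _ = (C * (‖s‖ + 1)) ^ 2 * (‖e‖ ^ 2 + ‖a‖ ^ 2) := by ring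
end
end

section
/- Let X₁, X₂ be complex Hilbert spaces, X = X₁ × X₂, E(x₁,x₂) = (E₁x₁, 0), Q(x₁,x₂) = (Q₁x₁, Q₂x₂) with E₁, Q₁, Q₂ bounded and boundedly invertible and E₁*Q₁ coercive. Suppose A = J − R where J is a (possibly unbounded) skew-adjoint operator on X (J* = −J as unbounded operators), R is a bounded, self-adjoint, non-negative operator on X, and D(A) = D(J). Then the following are equivalent: (1) A is maximally dissipative and there exists m > 0 such that ‖E(Q⁻¹x)‖² + ‖A x‖² ≥ m²‖x‖² for all x ∈ D(J); (2) there exists m > 0 such that ‖E(Q⁻¹x)‖² + ‖J x‖² + ‖R x‖² ≥ m²‖x‖² for all x ∈ D(J). -/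
/-!
In the Hilbert space `X₁ × X₂` the operator `A = J - R` satisfies
`Re ⟪A x, x⟫ = -⟪R x, x⟫`, because `J` is skew. This gives dissipativity at once, and the bound
`‖x‖ ≤ ‖x - A x‖`. Since `J` is closed, the range of `1 - A` is therefore closed; a vector
orthogonal to it lies in `D(J*) = D(J)`, satisfies `J z = -(z + R z)`, and so vanishes. Hence
`A` is automatically maximally dissipative (`surjective_one_sub`).

For the two lower bounds, (1) ⇒ (2) is `‖J x - R x‖² ≤ 2‖J x‖² + 2‖R x‖²`. For (2) ⇒ (1),
non-negativity of `R` gives `‖R x‖² ≤ K ⟪R x, x⟫ = -K Re ⟪A x, x⟫ ≤ K ‖A x‖ ‖x‖`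
(`sq_norm_le_mul_re_inner`), so both `‖R x‖²` and `‖J x‖² ≤ 2‖A x‖² + 2‖R x‖²` are controlled by
`‖A x‖²` and an arbitrarily small multiple of `‖x‖²`, which is absorbed (`lower_bound_sub`).

The type `X₁ × X₂` carries the sup norm, so these arguments are run in `WithLp 2 (X₁ × X₂)`.
To avoid transporting partial operators, the lemmas describe an unbounded operator on `H` by a
pair of linear maps `ι J : V →ₗ[ℂ] H`, where `V` is the domain and `ι` its inclusion.
-/


noncomputable section

open Complex ContinuousLinearMap
open scoped ComplexInnerProductSpace

variable {X₁ X₂ : Type*}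
  [NormedAddCommGroup X₁] [InnerProductSpace ℂ X₁] [CompleteSpace X₁]
  [NormedAddCommGroup X₂] [InnerProductSpace ℂ X₂] [CompleteSpace X₂]

/-- The (complex) inner product on the Hilbert-space product `X₁ × X₂`. -/
def cInner2 (x y : X₁ × X₂) : ℂ := ⟪x.1, y.1⟫ + ⟪x.2, y.2⟫

section Hilbert

variable {V H : Type*} [AddCommGroup V] [Module ℂ V]
  [NormedAddCommGroup H] [InnerProductSpace ℂ H]

lemma re_inner_skew_self {ι J : V →ₗ[ℂ] H} (hskew : ∀ v w, ⟪J v, ι w⟫ = -⟪ι v, J w⟫) (v : V) :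
    (⟪J v, ι v⟫).re = 0 := by
  have h := congrArg Complex.re (hskew v v)
  have h2 : (⟪ι v, J v⟫).re = (⟪J v, ι v⟫).re := inner_re_symm (𝕜 := ℂ) _ _
  rw [Complex.neg_re, h2] at h
  linarith

lemma eq_of_inner_denseRange {ι : V →ₗ[ℂ] H} (hd : DenseRange ι) {a b : H}
    (h : ∀ v, ⟪ι v, a⟫ = ⟪ι v, b⟫) : a = b := by
  have h1 : (fun x : H => ⟪x, a⟫) = fun x => ⟪x, b⟫ :=
    hd.equalizer (by fun_prop) (by fun_prop) (funext h)
  exact ext_inner_left ℂ (fun x => congrFun h1 x)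

/-- A bounded non-negative operator satisfies `R² ≤ K R` for `K ≥ ‖R‖`; here `K = ‖R‖ + 1`. -/
lemma sq_norm_le_mul_re_inner (R : H →L[ℂ] H) (hsym : ∀ x y, ⟪R x, y⟫ = ⟪x, R y⟫)
    (hnn : ∀ x, 0 ≤ (⟪R x, x⟫).re) (x : H) :
    ‖R x‖ ^ 2 ≤ (‖R‖ + 1) * (⟪R x, x⟫).re := by
  have hK : 0 < ‖R‖ + 1 := by positivity
  -- Expand `0 ≤ ⟪R y, y⟫` at `y = K x - R x`.
  have h := hnn (((‖R‖ + 1 : ℝ) : ℂ) • x - R x)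
  have hRR : (⟪R (R x), R x⟫).re ≤ (‖R‖ + 1) * ‖R x‖ ^ 2 := by
    have h1 : (⟪R (R x), R x⟫).re ≤ ‖R (R x)‖ * ‖R x‖ := re_inner_le_norm (𝕜 := ℂ) _ _
    have h2 := R.le_opNorm (R x)
    nlinarith [norm_nonneg (R x), mul_le_mul_of_nonneg_right h2 (norm_nonneg (R x))]
  have hself : (⟪R x, R x⟫).re = ‖R x‖ ^ 2 := inner_self_eq_norm_sq (𝕜 := ℂ) (R x)
  have h3 : ⟪R (R x), x⟫ = ⟪R x, R x⟫ := hsym _ _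
  simp only [map_sub, map_smul, inner_sub_left, inner_sub_right, inner_smul_left,
    inner_smul_right, Complex.conj_ofReal, h3, Complex.sub_re, Complex.re_ofReal_mul, hself] at h
  have h4 : 0 ≤ (‖R‖ + 1) * ((‖R‖ + 1) * (⟪R x, x⟫).re - ‖R x‖ ^ 2) := by nlinarith
  have := nonneg_of_mul_nonneg_right h4 hK
  linarith

/-- If `J` is skew-adjoint and `R` is bounded and non-negative, then `1 - (J - R)` is onto. -/
lemma surjective_one_sub [CompleteSpace H] (ι J : V →ₗ[ℂ] H) (hd : DenseRange ι)
    (hskew : ∀ v w, ⟪J v, ι w⟫ = -⟪ι v, J w⟫)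
    (hmax : ∀ z w : H, (∀ v, ⟪J v, z⟫ = ⟪ι v, w⟫) → ∃ u, ι u = z)
    (R : H →L[ℂ] H) (hsym : ∀ x y, ⟪R x, y⟫ = ⟪x, R y⟫) (hnn : ∀ x, 0 ≤ (⟪R x, x⟫).re) (y : H) :
    ∃ v, ι v - (J v - R (ι v)) = y := by
  let T : V →ₗ[ℂ] H := ι - (J - R.toLinearMap ∘ₗ ι)
  have hT : ∀ v, T v = ι v - (J v - R (ι v)) := fun v => rfl
  have hbound : ∀ v, ‖ι v‖ ≤ ‖T v‖ := by
    intro v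
    have h1 : (⟪T v, ι v⟫).re ≤ ‖T v‖ * ‖ι v‖ := re_inner_le_norm (𝕜 := ℂ) _ _
    have h2 : (⟪ι v, ι v⟫).re = ‖ι v‖ ^ 2 := inner_self_eq_norm_sq (𝕜 := ℂ) (ι v)
    rw [hT v, inner_sub_left, inner_sub_left, Complex.sub_re, Complex.sub_re,
      re_inner_skew_self hskew, h2, ← hT v] at h1
    have h3 := hnn (ι v)
    by_contra! hlt
    nlinarith [norm_nonneg (T v)]
  have hclosed : IsClosed (LinearMap.range T : Set H) := by
    apply IsSeqClosed.isClosed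
    intro s a hs ha
    choose u hu using hs
    have hcau : CauchySeq (fun n => ι (u n)) := by
      have hs' : CauchySeq s := ha.cauchySeq
      rw [Metric.cauchySeq_iff] at hs' ⊢
      intro ε hε
      obtain ⟨N, hN⟩ := hs' ε hε
      refine ⟨N, fun i hi j hj => lt_of_le_of_lt ?_ (hN i hi j hj)⟩
      rw [dist_eq_norm, dist_eq_norm, ← hu i, ← hu j, ← map_sub, ← map_sub]
      exact hbound _
    obtain ⟨z, hz⟩ := cauchySeq_tendsto_of_complete hcau
    have hJ : Filter.Tendsto (fun n => J (u n)) Filter.atTop (nhds (z + R z - a)) := by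
      have h1 := (hz.add ((R.continuous.tendsto z).comp hz)).sub ha
      refine h1.congr fun n => ?_
      rw [← hu n, hT]
      simp only [Function.comp_apply]
      abel
    -- The graph of `J` is closed: `z` lies in the domain of the adjoint.
    have hadj : ∀ v, ⟪J v, z⟫ = ⟪ι v, -(z + R z - a)⟫ := by
      intro v
      have h1 : Filter.Tendsto (fun n => ⟪J v, ι (u n)⟫) Filter.atTop (nhds ⟪J v, z⟫) :=
        tendsto_const_nhds.inner hz
      have h2 : Filter.Tendsto (fun n => -⟪ι v, J (u n)⟫) Filter.atTop
          (nhds (-⟪ι v, z + R z - a⟫)) := (tendsto_const_nhds.inner hJ).neg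
      rw [inner_neg_right]
      exact tendsto_nhds_unique h1 (h2.congr fun n => (hskew v (u n)).symm)
    obtain ⟨w, rfl⟩ := hmax _ _ hadj
    have hJw : J w = ι w + R (ι w) - a := by
      refine eq_of_inner_denseRange hd fun v => ?_
      have h1 := hadj v
      rw [hskew, inner_neg_right] at h1
      exact neg_injective h1
    exact ⟨w, by rw [hT, hJw]; abel⟩
  have hperp : (LinearMap.range T)ᗮ = ⊥ := by
    rw [Submodule.eq_bot_iff]
    intro z hz
    have h0 : ∀ v, ⟪T v, z⟫ = 0 := fun v =>
      (Submodule.mem_orthogonal _ _).1 hz _ ⟨v, rfl⟩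
    have hadj : ∀ v, ⟪J v, z⟫ = ⟪ι v, z + R z⟫ := by
      intro v
      have h1 := h0 v
      rw [hT, inner_sub_left, inner_sub_left, hsym] at h1
      rw [inner_add_right]
      linear_combination -h1
    obtain ⟨w, rfl⟩ := hmax _ _ hadj
    have hJw : J w = -(ι w + R (ι w)) := by
      refine eq_of_inner_denseRange hd fun v => ?_
      have h1 := hadj v
      rw [hskew] at h1
      rw [inner_neg_right, ← h1, neg_neg]
    have h1 := re_inner_skew_self hskew w
    have h2 : (⟪ι w, ι w⟫).re = ‖ι w‖ ^ 2 := inner_self_eq_norm_sq (𝕜 := ℂ) (ι w)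
    rw [hJw, inner_neg_left, inner_add_left, Complex.neg_re, Complex.add_re, h2] at h1
    have h3 := hnn (ι w)
    have h4 : ‖ι w‖ ^ 2 = 0 := by nlinarith [sq_nonneg ‖ι w‖]
    exact norm_eq_zero.1 (pow_eq_zero_iff two_ne_zero |>.1 h4)
  haveI : CompleteSpace (LinearMap.range T) := hclosed.completeSpace_coe
  have htop := Submodule.orthogonal_eq_bot_iff.1 hperp
  obtain ⟨v, hv⟩ := LinearMap.range_eq_top.1 htop y
  exact ⟨v, hv⟩

/-- A lower bound in terms of `e + ‖J x‖² + ‖R x‖²` yields one in terms of `e + ‖J x - R x‖²`,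
with a constant depending only on `c` and `‖R‖`. -/
lemma lower_bound_sub (ι J : V →ₗ[ℂ] H) (hskew : ∀ v w, ⟪J v, ι w⟫ = -⟪ι v, J w⟫)
    (R : H →L[ℂ] H) (hsym : ∀ x y, ⟪R x, y⟫ = ⟪x, R y⟫) (hnn : ∀ x, 0 ≤ (⟪R x, x⟫).re)
    {c : ℝ} (hc : 0 < c) :
    ∃ c' : ℝ, 0 < c' ∧ ∀ (v : V) (e : ℝ), 0 ≤ e →
      c * ‖ι v‖ ^ 2 ≤ e + ‖J v‖ ^ 2 + ‖R (ι v)‖ ^ 2 →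
      c' * ‖ι v‖ ^ 2 ≤ e + ‖J v - R (ι v)‖ ^ 2 := by
  -- `M` collects the coefficients of `‖A v‖²` after `3 K a b ≤ (c / 2) b² + (9 K² / (2 c)) a²`.
  set K : ℝ := ‖R‖ + 1 with hK
  set M : ℝ := 2 + 9 * K ^ 2 / (2 * c) with hM
  have hMpos : 0 < M := by positivity
  refine ⟨c / 2 / M, by positivity, fun v e he h => ?_⟩
  set a := ‖J v - R (ι v)‖ with ha
  set b := ‖ι v‖ with hb
  have ha0 : 0 ≤ a := norm_nonneg _
  have hb0 : 0 ≤ b := norm_nonneg _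
  have hR1 : ‖R (ι v)‖ ^ 2 ≤ K * (⟪R (ι v), ι v⟫).re := sq_norm_le_mul_re_inner R hsym hnn _
  have hR2 : (⟪R (ι v), ι v⟫).re ≤ a * b := by
    have h1 : (⟪-(J v - R (ι v)), ι v⟫).re ≤ ‖-(J v - R (ι v))‖ * ‖ι v‖ :=
      re_inner_le_norm (𝕜 := ℂ) _ _
    rw [norm_neg, inner_neg_left, inner_sub_left, Complex.neg_re, Complex.sub_re,
      re_inner_skew_self hskew] at h1
    linarith
  have hKpos : 0 < K := by positivity
  have hR : ‖R (ι v)‖ ^ 2 ≤ K * (a * b) := hR1.trans (by gcongr)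
  have hJ : ‖J v‖ ^ 2 ≤ 2 * a ^ 2 + 2 * ‖R (ι v)‖ ^ 2 := by
    have h1 : ‖J v‖ ≤ a + ‖R (ι v)‖ := by
      have := norm_add_le (J v - R (ι v)) (R (ι v))
      rwa [sub_add_cancel] at this
    nlinarith [norm_nonneg (J v), sq_nonneg (a - ‖R (ι v)‖)]
  have hyoung : 3 * K * (a * b) ≤ c / 2 * b ^ 2 + 9 * K ^ 2 / (2 * c) * a ^ 2 := by
    have h1 : c / 2 * b ^ 2 + 9 * K ^ 2 / (2 * c) * a ^ 2 - 3 * K * (a * b)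
        = (c * b - 3 * K * a) ^ 2 / (2 * c) := by
      field_simp
      ring
    have h2 : 0 ≤ (c * b - 3 * K * a) ^ 2 / (2 * c) := by positivity
    linarith
  have hM1 : 1 ≤ M := by
    have : 0 ≤ 9 * K ^ 2 / (2 * c) := by positivity
    linarith
  have key : c / 2 * b ^ 2 ≤ M * (e + a ^ 2) := by
    have : e ≤ M * e := le_mul_of_one_le_left he hM1
    have : M * (e + a ^ 2) = M * e + 2 * a ^ 2 + 9 * K ^ 2 / (2 * c) * a ^ 2 := by
      rw [hM]; ring
    linarith
  rw [div_mul_eq_mul_div, div_le_iff₀ hMpos]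
  linarith

end Hilbert

lemma sq_norm_le_sq_norm_toLp (x : X₁ × X₂) : ‖x‖ ^ 2 ≤ ‖WithLp.toLp 2 x‖ ^ 2 := by
  rw [WithLp.prod_norm_sq_eq_of_L2, Prod.norm_def]
  rcases max_choice ‖x.1‖ ‖x.2‖ with h | h <;> rw [h] <;> simp

lemma sq_norm_toLp_le (x : X₁ × X₂) : ‖WithLp.toLp 2 x‖ ^ 2 ≤ 2 * ‖x‖ ^ 2 := by
  rw [WithLp.prod_norm_sq_eq_of_L2, Prod.norm_def]
  have h1 : ‖x.1‖ ^ 2 ≤ max ‖x.1‖ ‖x.2‖ ^ 2 := by gcongr; exact le_max_left _ _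
  have h2 : ‖x.2‖ ^ 2 ≤ max ‖x.1‖ ‖x.2‖ ^ 2 := by gcongr; exact le_max_right _ _
  simp only [WithLp.toLp_fst, WithLp.toLp_snd]
  linarith

/-- Lemma `L:A=J-R`: for `A = J - R` with `J` skew-adjoint, `R` bounded,
self-adjoint, non-negative, `D(A) = D(J)`, the condition
"`A` maximally dissipative and `‖E Q⁻¹ x‖² + ‖A x‖² ≥ m² ‖x‖²`" is equivalent to
"`‖E Q⁻¹ x‖² + ‖J x‖² + ‖R x‖² ≥ m² ‖x‖²`".
Skew-adjointness of the unbounded operator `J` (i.e. `J* = -J` with equal domains) is expressed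
by: `J` densely defined, `⟨J x, y⟩ = -⟨x, J y⟩` on `D(J)`, and every `z` in the domain of the
adjoint (i.e. admitting `w` with `⟨J x, z⟩ = ⟨x, w⟩` for all `x ∈ D(J)`) lies in `D(J)`. -/
theorem statement_7
    (E₁ Q₁ : X₁ ≃L[ℂ] X₁) (Q₂ : X₂ ≃L[ℂ] X₂)
    (hcoer : Coercive ((ContinuousLinearMap.adjoint (E₁ : X₁ →L[ℂ] X₁)).comp
      (Q₁ : X₁ →L[ℂ] X₁)))
    (J : (X₁ × X₂) →ₗ.[ℂ] (X₁ × X₂))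
    (hdense : Dense (J.domain : Set (X₁ × X₂)))
    (hskew : ∀ x y : J.domain, cInner2 (J x) (y : X₁ × X₂) = - cInner2 (x : X₁ × X₂) (J y))
    (hmaxdom : ∀ z w : X₁ × X₂,
      (∀ x : J.domain, cInner2 (J x) z = cInner2 (x : X₁ × X₂) w) → z ∈ J.domain)
    (R : (X₁ × X₂) →L[ℂ] (X₁ × X₂))
    (hRsym : ∀ x y : X₁ × X₂, cInner2 (R x) y = cInner2 x (R y))
    (hRnn : ∀ x : X₁ × X₂, 0 ≤ (cInner2 (R x) x).re) :
    (((∀ x : J.domain, reInner2 (J x - R (x : X₁ × X₂)) (x : X₁ × X₂) ≤ 0) ∧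
        ∃ l : ℝ, 0 < l ∧ ∀ y : X₁ × X₂, ∃ x : J.domain,
          (l : ℂ) • (x : X₁ × X₂) - (J x - R (x : X₁ × X₂)) = y) ∧
      (∃ m : ℝ, 0 < m ∧ ∀ x : J.domain,
        m ^ 2 * ‖(x : X₁ × X₂)‖ ^ 2 ≤
          ‖((E₁ (Q₁.symm (x : X₁ × X₂).1), (0 : X₂)) : X₁ × X₂)‖ ^ 2 +
            ‖J x - R (x : X₁ × X₂)‖ ^ 2)) ↔
    (∃ m : ℝ, 0 < m ∧ ∀ x : J.domain,
      m ^ 2 * ‖(x : X₁ × X₂)‖ ^ 2 ≤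
        ‖((E₁ (Q₁.symm (x : X₁ × X₂).1), (0 : X₂)) : X₁ × X₂)‖ ^ 2 +
          ‖J x‖ ^ 2 + ‖R (x : X₁ × X₂)‖ ^ 2) := by
  constructor
  · rintro ⟨-, m, hm, h⟩
    refine ⟨m / 2, by positivity, fun x => ?_⟩
    have h1 := h x
    have h2 := norm_sub_le (J x) (R (x : X₁ × X₂))
    have h3 : ‖J x - R (x : X₁ × X₂)‖ ^ 2 ≤ 2 * ‖J x‖ ^ 2 + 2 * ‖R (x : X₁ × X₂)‖ ^ 2 := by
      nlinarith [norm_nonneg (J x - R (x : X₁ × X₂)),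
        sq_nonneg (‖J x‖ - ‖R (x : X₁ × X₂)‖)]
    have h4 := sq_nonneg ‖((E₁ (Q₁.symm (x : X₁ × X₂).1), (0 : X₂)) : X₁ × X₂)‖
    have h5 := sq_nonneg ‖J x‖
    have h6 := sq_nonneg ‖R (x : X₁ × X₂)‖
    have h7 : (m / 2) ^ 2 * ‖(x : X₁ × X₂)‖ ^ 2 = m ^ 2 * ‖(x : X₁ × X₂)‖ ^ 2 / 4 := by ring
    linarith
  · rintro ⟨m, hm, h⟩
    let e : WithLp 2 (X₁ × X₂) ≃L[ℂ] X₁ × X₂ := WithLp.prodContinuousLinearEquiv 2 ℂ X₁ X₂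
    let ι : J.domain →ₗ[ℂ] WithLp 2 (X₁ × X₂) := e.symm.toLinearMap ∘ₗ J.domain.subtype
    let J' : J.domain →ₗ[ℂ] WithLp 2 (X₁ × X₂) := e.symm.toLinearMap ∘ₗ J.toFun
    let R' : WithLp 2 (X₁ × X₂) →L[ℂ] WithLp 2 (X₁ × X₂) :=
      (e.symm : X₁ × X₂ →L[ℂ] WithLp 2 (X₁ × X₂)) ∘L R ∘L
        (e : WithLp 2 (X₁ × X₂) →L[ℂ] X₁ × X₂)
    have hι : ∀ x, ι x = WithLp.toLp 2 (x : X₁ × X₂) := fun _ => rfl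
    have hJ' : ∀ x, J' x = WithLp.toLp 2 (J x) := fun _ => rfl
    have hR' : ∀ x : X₁ × X₂, R' (WithLp.toLp 2 x) = WithLp.toLp 2 (R x) := fun _ => rfl
    have hd : DenseRange ι :=
      e.symm.surjective.denseRange.comp hdense.denseRange_val e.symm.continuous
    have hskew' : ∀ v w, ⟪J' v, ι w⟫ = -⟪ι v, J' w⟫ := hskew
    have hmax' : ∀ z w : WithLp 2 (X₁ × X₂),
        (∀ v, ⟪J' v, z⟫ = ⟪ι v, w⟫) → ∃ u, ι u = z := fun z w hzw =>
      ⟨⟨e z, hmaxdom (e z) (e w) hzw⟩, rfl⟩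
    have hsym' : ∀ x y, ⟪R' x, y⟫ = ⟪x, R' y⟫ := fun x y => hRsym (e x) (e y)
    have hnn' : ∀ x, 0 ≤ (⟪R' x, x⟫).re := fun x => hRnn (e x)
    refine ⟨⟨fun x => ?_, 1, one_pos, fun y => ?_⟩, ?_⟩
    · have h1 := re_inner_skew_self hskew' x
      have h2 := hnn' (ι x)
      have h3 : reInner2 (J x - R (x : X₁ × X₂)) (x : X₁ × X₂)
          = (⟪J' x - R' (ι x), ι x⟫).re := rfl
      rw [h3, inner_sub_left, Complex.sub_re, h1]
      linarith
    · obtain ⟨x, hx⟩ := surjective_one_sub ι J' hd hskew' hmax' R' hsym' hnn' (e.symm y)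
      refine ⟨x, ?_⟩
      rw [Complex.ofReal_one, one_smul]
      exact congrArg e hx
    · obtain ⟨c, hc, hlow⟩ := lower_bound_sub ι J' hskew' R' hsym' hnn'
        (c := m ^ 2 / 2) (by positivity)
      -- The factor `1 / 2` pays for the comparison of the `ℓ²` norm with the sup norm.
      refine ⟨√(c / 2), by positivity, fun x => ?_⟩
      rw [Real.sq_sqrt (by positivity)]
      have h1 := hlow x (‖((E₁ (Q₁.symm (x : X₁ × X₂).1), (0 : X₂)) : X₁ × X₂)‖ ^ 2)
        (sq_nonneg _)
      rw [hι, hJ', hR', ← WithLp.toLp_sub] at h1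
      have h2 := h1 (by
        have a1 := sq_norm_toLp_le (x : X₁ × X₂)
        have a2 := sq_norm_le_sq_norm_toLp (J x)
        have a3 := sq_norm_le_sq_norm_toLp (R (x : X₁ × X₂))
        have a4 := mul_le_mul_of_nonneg_left a1 (sq_nonneg m)
        linarith [h x])
      have b1 := sq_norm_toLp_le (J x - R (x : X₁ × X₂))
      have b2 := mul_le_mul_of_nonneg_left (sq_norm_le_sq_norm_toLp (x : X₁ × X₂)) hc.le
      have b3 := sq_nonneg ‖((E₁ (Q₁.symm (x : X₁ × X₂).1), (0 : X₂)) : X₁ × X₂)‖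
      linarith
end
end

section
/- Let X₁, X₂ be complex Hilbert spaces, X = X₁ × X₂, A a dissipative linear operator on X with domain D(A), E(x₁,x₂) = (E₁x₁, 0), Q(x₁,x₂) = (Q₁x₁, Q₂x₂) with E₁, Q₁, Q₂ bounded and boundedly invertible and E₁*Q₁ coercive, and let E_I denote the bounded operator E_I(x₁,x₂) = (x₁, 0). Then there exists s ∈ ℂ with Re s > 0 such that s·E − A∘Q (with domain {x : Qx ∈ D(A)}) is boundedly invertible if and only if there exists s ∈ ℂ with Re s > 0 such that s·E_I − A (with domain D(A)) is boundedly invertible. -/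
/-!
Substituting `z = Q x` turns `s E - A Q` into `(s P ⊕ 0) - A` with `P = E₁ Q₁⁻¹`, which is
self-adjoint and coercive because `⟨P z, z⟩ = ⟨E₁ x, Q₁ x⟩` for `z = Q₁ x`. Hence both sides of the
equivalence speak of pencils `(M ⊕ 0) - A` where `Re ⟨M w, w⟩ ≥ c ‖w‖²`: for `M = s P` and `M = s`.
It suffices to show that regularity does not depend on `M` in this class (`PencilRegular.transfer`).

If `R` is the inverse for `M`, then `(N ⊕ 0) - A = (1 + ((N - M) ⊕ 0) R) ((M ⊕ 0) - A)`, and the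
first factor is block triangular with diagonal blocks `1 + (N - M) B` and `1`, where `B = R₁₁` is
the upper left block of `R`. Dissipativity of `A` gives `Re ⟨y - M B y, B y⟩ ≥ 0`, so
`Re ⟨(1 + (N - M) B) y, B y⟩ ≥ c ‖B y‖²`, which bounds `1 + (N - M) B` from below. The same holds,
uniformly in `t ∈ [0, 1]`, for `M + t (N - M)` in place of `N`, and the continuity method
connects `1 + (N - M) B` to the identity (`isUnit_schur`).
-/

noncomputable section

open Complex ContinuousLinearMap
open scoped ComplexInnerProductSpace

variable {X₁ X₂ : Type*}
  [NormedAddCommGroup X₁] [InnerProductSpace ℂ X₁] [CompleteSpace X₁]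
  [NormedAddCommGroup X₂] [InnerProductSpace ℂ X₂] [CompleteSpace X₂]

/-- `Re ⟨M w, w⟩ ≥ c ‖w‖²`, without self-adjointness of `M`. -/
def AccretiveBy (c : ℝ) (M : X₁ →L[ℂ] X₁) : Prop := ∀ w, c * ‖w‖ ^ 2 ≤ (⟪M w, w⟫).re

/-- The map `(M ⊕ 0) - A` on the domain of `A`. -/
def pencilMap (A : (X₁ × X₂) →ₗ.[ℂ] (X₁ × X₂)) (M : X₁ →L[ℂ] X₁) : A.domain →ₗ[ℂ] X₁ × X₂ :=
  LinearMap.inl ℂ X₁ X₂ ∘ₗ M.toLinearMap ∘ₗ LinearMap.fst ℂ X₁ X₂ ∘ₗ A.domain.subtype - A.toFun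

theorem pencilMap_apply (A : (X₁ × X₂) →ₗ.[ℂ] (X₁ × X₂)) (M : X₁ →L[ℂ] X₁) (x : A.domain) :
    pencilMap A M x = (M x.1.1, 0) - A x := rfl

/-- Bounded invertibility of `(M ⊕ 0) - A`; injectivity follows from the lower bound. -/
def PencilRegular (A : (X₁ × X₂) →ₗ.[ℂ] (X₁ × X₂)) (M : X₁ →L[ℂ] X₁) : Prop :=
  Function.Surjective (pencilMap A M) ∧
    ∃ C : ℝ, 0 < C ∧ ∀ x : A.domain, ‖x.1‖ ≤ C * ‖pencilMap A M x‖

theorem PencilRegular.injective {A : (X₁ × X₂) →ₗ.[ℂ] (X₁ × X₂)} {M : X₁ →L[ℂ] X₁}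
    (h : PencilRegular A M) : Function.Injective (pencilMap A M) := by
  obtain ⟨-, C, -, hC⟩ := h
  rw [injective_iff_map_eq_zero]
  intro x hx
  have := hC x
  rw [hx, norm_zero, mul_zero, norm_le_zero_iff] at this
  exact Subtype.ext this

/-- One step of the continuity method. -/
theorem isUnit_add_of_small {S D : X₁ →L[ℂ] X₁} {K : ℝ} (hK : 0 ≤ K) (hS : IsUnit S)
    (hb : ∀ y, ‖y‖ ≤ K * ‖S y‖) (hD : K * ‖D‖ < 1) : IsUnit (S + D) := by
  obtain ⟨u, rfl⟩ := hS
  have hn : ‖(↑u⁻¹ : X₁ →L[ℂ] X₁)‖ ≤ K := by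
    refine ContinuousLinearMap.opNorm_le_bound _ hK fun y => ?_
    have h1 := hb ((↑u⁻¹ : X₁ →L[ℂ] X₁) y)
    rwa [← mul_apply_eq_comp, Units.mul_inv, one_apply_eq_self] at h1
  have hlt : ‖-((↑u⁻¹ : X₁ →L[ℂ] X₁) * D)‖ < 1 := by
    rw [norm_neg]
    calc _ ≤ ‖(↑u⁻¹ : X₁ →L[ℂ] X₁)‖ * ‖D‖ := norm_mul_le _ _
      _ ≤ K * ‖D‖ := by gcongr
      _ < 1 := hD
  have h2 := (u.isUnit).mul (isUnit_one_sub_of_norm_lt_one hlt)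
  rwa [sub_neg_eq_add, mul_add, mul_one, ← mul_assoc, Units.mul_inv, one_mul] at h2

/-- The continuity method along the segment from `1` to `1 + D`. -/
theorem isUnit_one_add_of_bound {D : X₁ →L[ℂ] X₁} {K : ℝ} (hK : 0 ≤ K)
    (hb : ∀ t : ℝ, 0 ≤ t → t ≤ 1 → ∀ y, ‖y‖ ≤ K * ‖y + (t : ℂ) • D y‖) : IsUnit (1 + D) := by
  obtain ⟨n, hn⟩ := exists_nat_gt (K * ‖D‖)
  have hn0 : (0 : ℝ) < n := lt_of_le_of_lt (by positivity) hn
  have key : ∀ k : ℕ, k ≤ n → IsUnit (1 + (((k / n : ℝ) : ℂ)) • D) := by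
    intro k
    induction k with
    | zero => intro _; simp
    | succ k ih =>
      intro hk
      have h1 := ih (by omega)
      have hkn : (k : ℝ) ≤ n := by exact_mod_cast (by omega : k ≤ n)
      have h2 := isUnit_add_of_small (D := (((1 / n : ℝ) : ℂ)) • D) hK h1
        (fun y => hb (k / n) (by positivity) ((div_le_one hn0).2 hkn) y)
        (by
          rw [norm_smul, Complex.norm_real, Real.norm_of_nonneg (by positivity)]
          calc K * (1 / n * ‖D‖) = K * ‖D‖ / n := by ring
            _ < 1 := (div_lt_one hn0).2 hn)
      rw [add_assoc, ← add_smul, ← Complex.ofReal_add, ← add_div] at h2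
      rwa [Nat.cast_succ]
  have := key n le_rfl
  rwa [div_self hn0.ne', Complex.ofReal_one, one_smul] at this

/-- If `Re ⟨y - M B y, B y⟩ ≥ 0` for all `y`, then `1 + (N - M) B` is invertible, for `M` and `N`
accretive with a positive constant. -/
theorem isUnit_schur {B M N : X₁ →L[ℂ] X₁} {c : ℝ} (hc : 0 < c) (hM : AccretiveBy c M)
    (hN : AccretiveBy c N) (hB : ∀ y, 0 ≤ (⟪y - M (B y), B y⟫).re) :
    IsUnit (1 + (N - M) * B) := by
  refine isUnit_one_add_of_bound (K := 1 + ‖N - M‖ / c) (by positivity) fun t ht0 ht1 y => ?_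
  set w := B y with hw
  set v := y + (t : ℂ) • ((N - M) * B) y with hv
  have hv' : v = (y - M w) + (((1 - t : ℝ) : ℂ) • M w + (t : ℂ) • N w) := by
    simp only [hv, hw, mul_apply_eq_comp, _root_.sub_apply, smul_sub]
    push_cast
    rw [sub_smul, one_smul]
    abel
  have hre : c * ‖w‖ ^ 2 ≤ (⟪v, w⟫).re := by
    rw [hv', inner_add_left, inner_add_left, inner_smul_left, inner_smul_left, Complex.add_re,
      Complex.add_re, Complex.conj_ofReal, Complex.conj_ofReal, Complex.re_ofReal_mul,
      Complex.re_ofReal_mul]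
    linarith [hB y, mul_le_mul_of_nonneg_left (hM w) (sub_nonneg.2 ht1),
      mul_le_mul_of_nonneg_left (hN w) ht0]
  have hle : (⟪v, w⟫).re ≤ ‖v‖ * ‖w‖ := (Complex.re_le_norm _).trans (norm_inner_le_norm v w)
  have hwv : ‖w‖ ≤ ‖v‖ / c := by
    rw [le_div_iff₀ hc]
    rcases (norm_nonneg w).eq_or_lt with h0 | h0
    · rw [← h0, zero_mul]
      exact norm_nonneg v
    · refine le_of_mul_le_mul_right ?_ h0
      nlinarith
  have hy : y = v - (t : ℂ) • (N - M) w := by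
    simp [hv, hw]
  calc ‖y‖ = ‖v - (t : ℂ) • (N - M) w‖ := by rw [← hy]
    _ ≤ ‖v‖ + ‖(t : ℂ) • (N - M) w‖ := norm_sub_le _ _
    _ ≤ ‖v‖ + 1 * (‖N - M‖ * (‖v‖ / c)) := by
        rw [norm_smul, Complex.norm_real, Real.norm_of_nonneg ht0]
        gcongr
        exact ((N - M).le_opNorm w).trans (by gcongr)
    _ = (1 + ‖N - M‖ / c) * ‖v‖ := by ring

theorem PencilRegular.transfer {A : (X₁ × X₂) →ₗ.[ℂ] (X₁ × X₂)} (hA : DissipativeProd A)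
    {M N : X₁ →L[ℂ] X₁} {c : ℝ} (hc : 0 < c) (hM : AccretiveBy c M) (hN : AccretiveBy c N)
    (h : PencilRegular A M) : PencilRegular A N := by
  have hinj := h.injective
  obtain ⟨hsurj, C, hC0, hC⟩ := h
  let e := LinearEquiv.ofBijective (pencilMap A M) ⟨hinj, hsurj⟩
  have he : ∀ y, pencilMap A M (e.symm y) = y := fun y => e.apply_symm_apply y
  have hes : ∀ x, e.symm (pencilMap A M x) = x := fun x => e.symm_apply_apply x
  let R : (X₁ × X₂) →L[ℂ] (X₁ × X₂) :=
    (A.domain.subtype ∘ₗ e.symm.toLinearMap).mkContinuous C fun y => by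
      have := hC (e.symm y)
      rwa [he] at this
  have hR : ∀ y, R y = (e.symm y).1 := fun y => rfl
  -- `B` and `B'` form the first row of the block operator `R`.
  let B : X₁ →L[ℂ] X₁ :=
    (ContinuousLinearMap.fst ℂ X₁ X₂).comp (R.comp (ContinuousLinearMap.inl ℂ X₁ X₂))
  let B' : X₂ →L[ℂ] X₁ :=
    (ContinuousLinearMap.fst ℂ X₁ X₂).comp (R.comp (ContinuousLinearMap.inr ℂ X₁ X₂))
  have hBB : ∀ y, (R y).1 = B y.1 + B' y.2 := by
    intro y
    have : y = (y.1, 0) + (0, y.2) := by simp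
    conv_lhs => rw [this, map_add]
    rfl
  have hB : ∀ y, 0 ≤ (⟪y - M (B y), B y⟫).re := by
    intro y
    have h1 := hA (e.symm (y, 0))
    have h2 := he (y, 0)
    rw [pencilMap_apply, sub_eq_iff_eq_add, ← sub_eq_iff_eq_add'] at h2
    have h3 : (e.symm (y, 0)).1.1 = B y := rfl
    rw [← h2, h3] at h1
    simp only [reInner2, Prod.fst_sub, Prod.snd_sub, sub_self, inner_zero_left, h3,
      Complex.zero_re, add_zero] at h1
    rw [← neg_sub, inner_neg_left, Complex.neg_re] at h1
    linarith
  obtain ⟨u, hu⟩ := isUnit_schur hc hM hN hB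
  have hNM : ∀ x, pencilMap A N x = pencilMap A M x + ((N - M) x.1.1, 0) := by
    intro x
    simp only [pencilMap_apply, _root_.sub_apply]
    ext <;> simp
  have hTu : ∀ z : X₁, (u : X₁ →L[ℂ] X₁) z = z + (N - M) (B z) := fun z => by
    rw [hu]
    rfl
  refine ⟨fun y => ?_, ?_⟩
  · let z := (↑u⁻¹ : X₁ →L[ℂ] X₁) (y.1 - (N - M) (B' y.2))
    have hz : z + (N - M) (B z) = y.1 - (N - M) (B' y.2) := by
      rw [← hTu, ← mul_apply_eq_comp, Units.mul_inv, one_apply_eq_self]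
    refine ⟨e.symm (z, y.2), ?_⟩
    rw [hNM, he, ← hR, hBB]
    refine Prod.ext ?_ ?_
    · simp only [Prod.fst_add, map_add]
      rw [← add_assoc, hz, sub_add_cancel]
    · simp
  · set K := ‖(↑u⁻¹ : X₁ →L[ℂ] X₁)‖ * (1 + ‖(N - M).comp B'‖) + 1 with hKdef
    have hK : 0 < K := by positivity
    refine ⟨C * K, by positivity, fun x => ?_⟩
    set y := pencilMap A M x with hy
    set y' := pencilMap A N x with hy'
    have hyy : y' = y + ((N - M) (B y.1 + B' y.2), 0) := by
      rw [hy', hNM, ← hBB, hR, hes]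
    have h2 : y.2 = y'.2 := by
      rw [hyy]
      simp
    have h1 : (u : X₁ →L[ℂ] X₁) y.1 = y'.1 - ((N - M).comp B') y'.2 := by
      rw [hTu, ← h2, hyy]
      simp only [Prod.fst_add, map_add, ContinuousLinearMap.comp_apply]
      abel
    have h3 : y.1 = (↑u⁻¹ : X₁ →L[ℂ] X₁) (y'.1 - ((N - M).comp B') y'.2) := by
      rw [← h1, ← mul_apply_eq_comp, Units.inv_mul, one_apply_eq_self]
    have n1 : ‖y.1‖ ≤ K * ‖y'‖ := by
      have a1 : ‖y'.1‖ ≤ ‖y'‖ := norm_fst_le y'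
      have a2 : ‖y'.2‖ ≤ ‖y'‖ := norm_snd_le y'
      calc ‖y.1‖ ≤ ‖(↑u⁻¹ : X₁ →L[ℂ] X₁)‖ * (‖y'‖ + ‖(N - M).comp B'‖ * ‖y'‖) := by
            rw [h3]
            refine (ContinuousLinearMap.le_opNorm _ _).trans ?_
            gcongr
            refine (norm_sub_le _ _).trans (add_le_add a1 ?_)
            exact (ContinuousLinearMap.le_opNorm _ _).trans (by gcongr)
        _ ≤ K * ‖y'‖ := by
            rw [hKdef]
            nlinarith [norm_nonneg y']
    have n2 : ‖y.2‖ ≤ K * ‖y'‖ := by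
      rw [h2]
      refine (norm_snd_le y').trans (le_mul_of_one_le_left (norm_nonneg _) ?_)
      rw [hKdef]
      exact le_add_of_nonneg_left (by positivity)
    calc ‖x.1‖ ≤ C * ‖y‖ := hC x
      _ ≤ C * (K * ‖y'‖) := by
        gcongr
        rw [Prod.norm_def]
        exact max_le n1 n2
      _ = C * K * ‖y'‖ := by ring

theorem pencilBddInv_id_iff (A : (X₁ × X₂) →ₗ.[ℂ] (X₁ × X₂)) (s : ℂ) :
    PencilBddInv s (fun x : X₁ × X₂ => ((x.1, 0) : X₁ × X₂)) (fun x => x) A ↔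
      PencilRegular A (s • (1 : X₁ →L[ℂ] X₁)) := by
  have heq : ∀ x : A.domain, pencilApply s (fun x : X₁ × X₂ => ((x.1, 0) : X₁ × X₂))
      (fun x => x) A x = pencilMap A (s • (1 : X₁ →L[ℂ] X₁)) x := by
    intro x
    simp [pencilApply, pencilMap_apply]
  have hfun := funext heq
  constructor
  · rintro ⟨hb, C, hC0, hC⟩
    refine ⟨hfun ▸ hb.2, C, hC0, fun x => ?_⟩
    rw [← heq]
    exact hC x
  · intro h
    have hbij : Function.Bijective (pencilMap A (s • (1 : X₁ →L[ℂ] X₁))) := ⟨h.injective, h.1⟩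
    rw [← hfun] at hbij
    refine ⟨hbij, ?_⟩
    obtain ⟨-, C, hC0, hC⟩ := h
    refine ⟨C, hC0, fun x => ?_⟩
    have := hC x
    rwa [← heq] at this

/-- The substitution `z = Q x`. -/
theorem pencilBddInv_iff (A : (X₁ × X₂) →ₗ.[ℂ] (X₁ × X₂)) (E₁ Q₁ : X₁ ≃L[ℂ] X₁)
    (Q₂ : X₂ ≃L[ℂ] X₂) (s : ℂ) :
    PencilBddInv s (blockE (E₁ : X₁ →L[ℂ] X₁))
        (blockQ (Q₁ : X₁ →L[ℂ] X₁) (Q₂ : X₂ →L[ℂ] X₂)) A ↔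
      PencilRegular A (s • (E₁ : X₁ →L[ℂ] X₁).comp (Q₁.symm : X₁ →L[ℂ] X₁)) := by
  let Q : (X₁ × X₂) ≃L[ℂ] (X₁ × X₂) := Q₁.prodCongr Q₂
  let q : {x : X₁ × X₂ // blockQ (Q₁ : X₁ →L[ℂ] X₁) (Q₂ : X₂ →L[ℂ] X₂) x ∈ A.domain} ≃
      A.domain := Q.toEquiv.subtypeEquiv fun x => Iff.rfl
  have hq : ∀ x, (q x).1 = Q x.1 := fun x => rfl
  have heq : ∀ x, pencilApply s (blockE (E₁ : X₁ →L[ℂ] X₁))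
      (blockQ (Q₁ : X₁ →L[ℂ] X₁) (Q₂ : X₂ →L[ℂ] X₂)) A x =
      pencilMap A (s • (E₁ : X₁ →L[ℂ] X₁).comp (Q₁.symm : X₁ →L[ℂ] X₁)) (q x) := by
    intro x
    have h1 : (q x).1.1 = Q₁ x.1.1 := rfl
    have h2 : A (q x) = A ⟨blockQ (Q₁ : X₁ →L[ℂ] X₁) (Q₂ : X₂ →L[ℂ] X₂) x.1, x.2⟩ := rfl
    rw [pencilMap_apply, h1, h2]
    simp [pencilApply, blockE]
  have hfun := funext heq
  constructor
  · rintro ⟨hb, C, hC0, hC⟩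
    rw [hfun] at hb
    refine ⟨fun y => ?_, (‖(Q : (X₁ × X₂) →L[ℂ] (X₁ × X₂))‖ + 1) * C, by positivity, fun x => ?_⟩
    · obtain ⟨x, hx⟩ := hb.2 y
      exact ⟨q x, hx⟩
    · obtain ⟨x, rfl⟩ := q.surjective x
      rw [← heq, hq, mul_assoc]
      refine ((Q : (X₁ × X₂) →L[ℂ] (X₁ × X₂)).le_opNorm x.1).trans ?_
      exact mul_le_mul (by linarith) (hC x) (norm_nonneg _) (by positivity)
  · intro h
    have hinj := h.injective
    obtain ⟨hs, C, hC0, hC⟩ := h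
    refine ⟨?_, (‖(Q.symm : (X₁ × X₂) →L[ℂ] (X₁ × X₂))‖ + 1) * C, by positivity, fun x => ?_⟩
    · rw [hfun]
      exact Function.Bijective.comp ⟨hinj, hs⟩ q.bijective
    · rw [heq, mul_assoc]
      have h1 := (Q.symm : (X₁ × X₂) →L[ℂ] (X₁ × X₂)).le_opNorm (Q x.1)
      rw [ContinuousLinearEquiv.coe_coe, Q.symm_apply_apply] at h1
      refine h1.trans ?_
      rw [← hq]
      exact mul_le_mul (by linarith) (hC (q x)) (norm_nonneg _) (by positivity)

/-- If `⟨P w, w⟩` is real for all `w`, then passing from `P` to `s • P` multiplies the accretivity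
constant by `Re s`. -/
theorem accretiveBy_smul {P : X₁ →L[ℂ] X₁} (hreal : ∀ w, (⟪P w, w⟫).im = 0) {c : ℝ}
    (hP : AccretiveBy c P) {s : ℂ} (hs : 0 < s.re) : AccretiveBy (s.re * c) (s • P) := by
  intro w
  rw [_root_.smul_apply, inner_smul_left, Complex.mul_re, hreal, mul_zero, sub_zero,
    Complex.conj_re, mul_assoc]
  exact mul_le_mul_of_nonneg_left (hP w) hs.le

/-- Corollary `C:8`: regularity of `(E, AQ)` is equivalent to regularity of
`(E_I, A)`, where `E_I = diag(I, 0)`. -/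
theorem statement_8
    (A : (X₁ × X₂) →ₗ.[ℂ] (X₁ × X₂)) (hA : DissipativeProd A)
    (E₁ Q₁ : X₁ ≃L[ℂ] X₁) (Q₂ : X₂ ≃L[ℂ] X₂)
    (hcoer : Coercive ((ContinuousLinearMap.adjoint (E₁ : X₁ →L[ℂ] X₁)).comp
      (Q₁ : X₁ →L[ℂ] X₁))) :
    (∃ s : ℂ, 0 < s.re ∧ PencilBddInv s (blockE (E₁ : X₁ →L[ℂ] X₁))
        (blockQ (Q₁ : X₁ →L[ℂ] X₁) (Q₂ : X₂ →L[ℂ] X₂)) A) ↔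
      (∃ s : ℂ, 0 < s.re ∧
        PencilBddInv s (fun x : X₁ × X₂ => ((x.1, 0) : X₁ × X₂)) (fun x => x) A) := by
  obtain ⟨hsa, c, hc, hcb⟩ := hcoer
  set P : X₁ →L[ℂ] X₁ := (E₁ : X₁ →L[ℂ] X₁).comp (Q₁.symm : X₁ →L[ℂ] X₁) with hP
  set S := (ContinuousLinearMap.adjoint (E₁ : X₁ →L[ℂ] X₁)).comp (Q₁ : X₁ →L[ℂ] X₁) with hS
  have hSP : ∀ w, ⟪P w, w⟫ = ⟪Q₁.symm w, S (Q₁.symm w)⟫ := by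
    intro w
    simp [hP, hS, ContinuousLinearMap.adjoint_inner_right]
  have hSreal : ∀ x, (⟪x, S x⟫).im = 0 := by
    intro x
    have h1 : ⟪S x, x⟫ = ⟪x, S x⟫ := hsa.isSymmetric x x
    rw [← inner_conj_symm] at h1
    exact Complex.conj_eq_iff_im.1 h1
  have hPreal : ∀ w, (⟪P w, w⟫).im = 0 := fun w => by
    rw [hSP]
    exact hSreal _
  -- The constant comes from `‖w‖ ≤ ‖Q₁‖ ‖Q₁⁻¹ w‖`; the `1 +` keeps `k` positive when `X₁ = 0`.
  set k := 1 + ‖(Q₁ : X₁ →L[ℂ] X₁)‖ with hk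
  have hk0 : 0 < k := by positivity
  have hPacc : AccretiveBy (c / k ^ 2) P := by
    intro w
    have h1 : (⟪P w, w⟫).re = (⟪S (Q₁.symm w), Q₁.symm w⟫).re := by
      rw [hSP, ← inner_conj_symm, Complex.conj_re]
    have h2 : ‖w‖ ≤ k * ‖Q₁.symm w‖ := by
      have h3 := (Q₁ : X₁ →L[ℂ] X₁).le_opNorm (Q₁.symm w)
      rw [ContinuousLinearEquiv.coe_coe, Q₁.apply_symm_apply] at h3
      refine h3.trans ?_
      gcongr
      linarith
    rw [h1]
    refine le_trans ?_ (hcb _)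
    calc c / k ^ 2 * ‖w‖ ^ 2 ≤ c / k ^ 2 * (k * ‖Q₁.symm w‖) ^ 2 := by gcongr
      _ = c * ‖Q₁.symm w‖ ^ 2 := by field_simp
  set d := min (c / k ^ 2) 1 with hd
  have hd0 : 0 < d := lt_min (by positivity) one_pos
  have hPd : AccretiveBy d P := fun w =>
    le_trans (mul_le_mul_of_nonneg_right (min_le_left _ _) (by positivity)) (hPacc w)
  have h1self : ∀ w : X₁, ⟪(1 : X₁ →L[ℂ] X₁) w, w⟫ = ((‖w‖ ^ 2 : ℝ) : ℂ) := fun w => by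
    rw [one_apply_eq_self, inner_self_eq_norm_sq_to_K]
    push_cast
    rfl
  have h1d : AccretiveBy d (1 : X₁ →L[ℂ] X₁) := fun w => by
    rw [h1self, Complex.ofReal_re]
    exact mul_le_of_le_one_left (by positivity) (min_le_right _ _)
  have h1real : ∀ w : X₁, (⟪(1 : X₁ →L[ℂ] X₁) w, w⟫).im = 0 := fun w => by
    rw [h1self, Complex.ofReal_im]
  -- The two pencils are boundedly invertible for the same `s`.
  refine exists_congr fun s => and_congr_right fun hs => ?_
  rw [pencilBddInv_iff, pencilBddInv_id_iff]
  have hMP := accretiveBy_smul hPreal hPd hs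
  have hM1 := accretiveBy_smul h1real h1d hs
  have hsd : 0 < s.re * d := mul_pos hs hd0
  exact ⟨PencilRegular.transfer hA hsd hMP hM1, PencilRegular.transfer hA hsd hM1 hMP⟩
end
end

section
/- Let X₁, X₂ be complex Hilbert spaces, X = X₁ × X₂, A a dissipative linear operator on X with domain D(A), E(x₁,x₂) = (E₁x₁, 0), Q(x₁,x₂) = (Q₁x₁, Q₂x₂) with E₁, Q₁, Q₂ bounded and boundedly invertible and E₁*Q₁ coercive. If there exists ε > 0 such that the operator x ↦ A x + ε·(0, x₂) (for x = (x₁,x₂) ∈ D(A)) is maximally dissipative, then the pair (E, AQ) is regular, i.e., there exists s ∈ ℂ with Re s > 0 such that s·E − A∘Q (with domain {x : Qx ∈ D(A)}) is boundedly invertible. -/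
/-!
Put `B = A + ε diag(0, I)`, which is maximally dissipative, and take `s = 1`. With `z = Q x` the
pencil becomes `E Q⁻¹ z - A z = K z - B z`, where `K = diag(E₁ Q₁⁻¹, ε I)` is bounded. Coercivity of
`E₁* Q₁` gives `Re ⟨K z, z⟩ ≥ k ‖z‖²` for some `k > 0`, so `K - B` is bounded below by `k`
(`norm_le_of_dissipative`).

For surjectivity (`surjective_of_maxDissipative`) let `R = (l - B)⁻¹` and
`T = (K - B) R = 1 + (K - l) R`, a bounded operator that is bounded below, hence has closed range.
If `w` is orthogonal to the range, then `w = -R* v` with `v = (K - l)* w`. Dissipativity of `B` means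
`l ‖R u‖² ≤ Re ⟨R u, u⟩`, which passes to `R*` (`adjoint_resolvent_ineq`); at `u = v` it reads
`Re ⟨w, K* w⟩ ≤ 0`, so `w = 0` by coercivity of `K`.
-/

noncomputable section

open Complex ContinuousLinearMap
open scoped ComplexInnerProductSpace

variable {X₁ X₂ : Type*}
  [NormedAddCommGroup X₁] [InnerProductSpace ℂ X₁] [CompleteSpace X₁]
  [NormedAddCommGroup X₂] [InnerProductSpace ℂ X₂] [CompleteSpace X₂]

section AbstractLemmas

variable {H : Type*} [NormedAddCommGroup H] [InnerProductSpace ℂ H]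

/-- A coercive perturbation of a dissipative operator is bounded below. The operator is given by
its domain `D` as an abstract module, the embedding `ι` of `D`, and its action `B`. -/
lemma norm_le_of_dissipative_s9 {D : Type*} [AddCommGroup D] [Module ℂ D] (ι B : D →ₗ[ℂ] H)
    (hB : ∀ x, (⟪B x, ι x⟫).re ≤ 0) (K : H →L[ℂ] H) {k : ℝ}
    (hK : ∀ z, k * ‖z‖ ^ 2 ≤ (⟪K z, z⟫).re) (x : D) :
    k * ‖ι x‖ ≤ ‖K (ι x) - B x‖ := by
  have h1 : k * ‖ι x‖ ^ 2 ≤ (⟪K (ι x) - B x, ι x⟫).re := by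
    rw [inner_sub_left, Complex.sub_re]
    linarith [hB x, hK (ι x)]
  have h2 : (⟪K (ι x) - B x, ι x⟫).re ≤ ‖K (ι x) - B x‖ * ‖ι x‖ :=
    (Complex.re_le_norm _).trans (norm_inner_le_norm _ _)
  rcases (norm_nonneg (ι x)).eq_or_lt with h0 | h0
  · rw [← h0]; simp
  · refine le_of_mul_le_mul_right ?_ h0
    nlinarith

variable [CompleteSpace H]

/-- The resolvent inequality `l ‖R v‖² ≤ Re ⟨R v, v⟩` says exactly that `2 l R - 1` is a
contraction, hence it is inherited by the adjoint. -/
lemma adjoint_resolvent_ineq (R : H →L[ℂ] H) {l : ℝ} (hl : 0 < l)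
    (hR : ∀ v, l * ‖R v‖ ^ 2 ≤ (⟪R v, v⟫).re) (v : H) :
    l * ‖adjoint R v‖ ^ 2 ≤ (⟪adjoint R v, v⟫).re := by
  have expand : ∀ a b : H, ‖((2 * l : ℝ) : ℂ) • a - b‖ ^ 2
      = 4 * l ^ 2 * ‖a‖ ^ 2 - 4 * l * (⟪a, b⟫).re + ‖b‖ ^ 2 := by
    intro a b
    rw [@norm_sub_sq ℂ, norm_smul, inner_smul_left, Complex.conj_ofReal]
    simp only [Complex.norm_real, Real.norm_eq_abs, RCLike.re_to_complex, Complex.re_ofReal_mul]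
    rw [abs_of_pos (by positivity)]
    ring
  set S : H →L[ℂ] H := ((2 * l : ℝ) : ℂ) • R - 1 with hS
  have hS1 : ‖S‖ ≤ 1 := by
    refine ContinuousLinearMap.opNorm_le_bound _ zero_le_one fun w => ?_
    rw [one_mul]
    refine le_of_sq_le_sq ?_ (norm_nonneg _)
    have : S w = ((2 * l : ℝ) : ℂ) • R w - w := by simp [hS]
    rw [this, expand]
    nlinarith [hR w]
  have hadj : adjoint S v = ((2 * l : ℝ) : ℂ) • adjoint R v - v := by
    refine ext_inner_right ℂ fun w => ?_
    rw [adjoint_inner_left, inner_sub_left, inner_smul_left, adjoint_inner_left,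
      Complex.conj_ofReal]
    simp [hS, inner_sub_right, inner_smul_right]
  have hle : ‖adjoint S v‖ ≤ ‖v‖ := by
    refine ((adjoint S).le_opNorm v).trans ?_
    rw [LinearIsometryEquiv.norm_map]
    nlinarith [norm_nonneg v]
  have hsq : ‖adjoint S v‖ ^ 2 ≤ ‖v‖ ^ 2 := by gcongr
  rw [hadj, expand] at hsq
  have : 0 ≤ 4 * l * ((⟪adjoint R v, v⟫).re - l * ‖adjoint R v‖ ^ 2) := by linarith
  linarith [nonneg_of_mul_nonneg_right this (by positivity)]

/-- If `B` is maximally dissipative and `K` is bounded with coercive real part, then `K - B` is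
surjective. The operator `B` is given as in `norm_le_of_dissipative`. -/
lemma surjective_of_maxDissipative {D : Type*} [AddCommGroup D] [Module ℂ D] (ι B : D →ₗ[ℂ] H)
    (hι : Function.Injective ι) (hB : ∀ x, (⟪B x, ι x⟫).re ≤ 0)
    {l : ℝ} (hl : 0 < l) (hsurj : ∀ y, ∃ x, (l : ℂ) • ι x - B x = y)
    (K : H →L[ℂ] H) {k : ℝ} (hk : 0 < k) (hK : ∀ z, k * ‖z‖ ^ 2 ≤ (⟪K z, z⟫).re) (y : H) :
    ∃ x, K (ι x) - B x = y := by
  let L : D →ₗ[ℂ] H := (l : ℂ) • ι - B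
  have hL : ∀ x, l * ‖ι x‖ ≤ ‖L x‖ := by
    intro x
    refine norm_le_of_dissipative_s9 ι B hB ((l : ℂ) • ContinuousLinearMap.id ℂ H) (fun z => ?_) x
    simp [← Complex.ofReal_pow]
  have hLbij : Function.Bijective L := by
    refine ⟨(injective_iff_map_eq_zero L).2 fun x hx => ?_, hsurj⟩
    have h := hL x
    rw [hx, norm_zero] at h
    have h0 : ‖ι x‖ = 0 := le_antisymm (by nlinarith) (norm_nonneg _)
    exact hι (by rw [norm_eq_zero.1 h0, map_zero])
  let e := LinearEquiv.ofBijective L hLbij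
  have he : ∀ v, L (e.symm v) = v := fun v => e.apply_symm_apply v
  -- the resolvent `(l - B)⁻¹`
  let R : H →L[ℂ] H := (ι ∘ₗ e.symm.toLinearMap).mkContinuous l⁻¹ fun v => by
    have h := hL (e.symm v)
    rw [he] at h
    rw [inv_mul_eq_div, le_div_iff₀ hl, mul_comm]
    exact h
  have hRe : ∀ v, R v = ι (e.symm v) := fun _ => rfl
  have hBe : ∀ v, B (e.symm v) = (l : ℂ) • R v - v := fun v => by
    have h : (l : ℂ) • ι (e.symm v) - B (e.symm v) = v := he v
    rw [hRe, eq_sub_iff_add_eq, ← sub_eq_iff_eq_add'.1 h]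
  have hR : ∀ v, l * ‖R v‖ ^ 2 ≤ (⟪R v, v⟫).re := by
    intro v
    have h := hB (e.symm v)
    rw [hBe, ← hRe, inner_sub_left, inner_smul_left, Complex.conj_ofReal, Complex.sub_re,
      Complex.re_ofReal_mul, inner_self_eq_norm_sq_to_K] at h
    have h' : (⟪R v, v⟫).re = (⟪v, R v⟫).re := inner_re_symm (𝕜 := ℂ) _ _
    have h2 : (((‖R v‖ : ℂ)) ^ 2).re = ‖R v‖ ^ 2 := by
      rw [← Complex.ofReal_pow, Complex.ofReal_re]
    rw [h']
    have h3 := h2 ▸ h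
    linarith
  -- `T = (K - B) (l - B)⁻¹`
  let M : H →L[ℂ] H := K - (l : ℂ) • ContinuousLinearMap.id ℂ H
  let T : H →L[ℂ] H := ContinuousLinearMap.id ℂ H + M.comp R
  have hT : ∀ v, T v = K (ι (e.symm v)) - B (e.symm v) := by
    intro v
    rw [hBe, ← hRe]
    simp only [T, M, add_apply, ContinuousLinearMap.comp_apply,
      sub_apply, smul_apply, ContinuousLinearMap.id_apply]
    abel
  have hTlow : ∀ v, ‖v‖ ≤ (1 + ‖M‖ / k) * ‖T v‖ := by
    intro v
    have h1 : k * ‖R v‖ ≤ ‖T v‖ := by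
      rw [hT]; exact norm_le_of_dissipative_s9 ι B hB K hK (e.symm v)
    have h2 : v = T v - M (R v) := by simp [T]
    have h3 : ‖v‖ ≤ ‖T v‖ + ‖M (R v)‖ := by
      conv_lhs => rw [h2]
      exact norm_sub_le _ _
    have h4 : ‖M (R v)‖ ≤ ‖M‖ * (‖T v‖ / k) := by
      refine (M.le_opNorm _).trans ?_
      gcongr
      rw [le_div_iff₀ hk, mul_comm]
      exact h1
    calc ‖v‖ ≤ ‖T v‖ + ‖M‖ * (‖T v‖ / k) := h3.trans (by gcongr)
      _ = (1 + ‖M‖ / k) * ‖T v‖ := by ring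
  have hclosed : IsClosed (T.range : Set H) := by
    have hanti : AntilipschitzWith (1 + ‖M‖ / k).toNNReal T := by
      refine T.antilipschitz_of_bound fun v => ?_
      rw [Real.coe_toNNReal _ (by positivity)]
      exact hTlow v
    exact hanti.isClosed_range T.uniformContinuous
  have hperp : T.rangeᗮ = ⊥ := by
    rw [Submodule.eq_bot_iff]
    intro w hw
    have hw0 : ∀ v, ⟪T v, w⟫ = 0 := fun v => (Submodule.mem_orthogonal _ _).1 hw _ ⟨v, rfl⟩
    have hw1 : w = - adjoint R (adjoint M w) := by
      rw [eq_neg_iff_add_eq_zero]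
      refine ext_inner_left ℂ fun v => ?_
      rw [inner_add_right, adjoint_inner_right, adjoint_inner_right, ← inner_add_left,
        inner_zero_right]
      exact hw0 v
    -- the resolvent inequality for `R*` at `(K - l)* w` reads `Re ⟨w, K* w⟩ ≤ 0`
    have h := adjoint_resolvent_ineq R hl hR (adjoint M w)
    rw [← neg_eq_iff_eq_neg.2 hw1, norm_neg, inner_neg_left, adjoint_inner_right] at h
    have hM : (⟪M w, w⟫).re = (⟪K w, w⟫).re - l * ‖w‖ ^ 2 := by
      simp [M, ← Complex.ofReal_pow]
    rw [Complex.neg_re, hM] at h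
    have h0 : ‖w‖ ^ 2 ≤ 0 := by nlinarith [hK w]
    simpa using h0
  have htop : T.range = ⊤ := by
    rw [← hclosed.submodule_topologicalClosure_eq, Submodule.topologicalClosure_eq_top_iff, hperp]
  obtain ⟨v, hv⟩ : y ∈ T.range := htop ▸ Submodule.mem_top
  exact ⟨e.symm v, by rw [← hT]; exact hv⟩

end AbstractLemmas

/-- Lemma `L:9`: if `A + ε diag(0, I)` is maximally dissipative for some `ε > 0`,
then the pair `(E, AQ)` is regular. -/
theorem statement_9
    (A : (X₁ × X₂) →ₗ.[ℂ] (X₁ × X₂)) (hA : DissipativeProd A)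
    (E₁ Q₁ : X₁ ≃L[ℂ] X₁) (Q₂ : X₂ ≃L[ℂ] X₂)
    (hcoer : Coercive ((ContinuousLinearMap.adjoint (E₁ : X₁ →L[ℂ] X₁)).comp
      (Q₁ : X₁ →L[ℂ] X₁)))
    (hpert : ∃ ε : ℝ, 0 < ε ∧
      ((∀ x : A.domain,
          reInner2 (A x + (ε : ℂ) • (((0 : X₁), (x : X₁ × X₂).2) : X₁ × X₂))
            (x : X₁ × X₂) ≤ 0) ∧
        ∃ l : ℝ, 0 < l ∧ ∀ y : X₁ × X₂, ∃ x : A.domain,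
          (l : ℂ) • (x : X₁ × X₂) -
            (A x + (ε : ℂ) • (((0 : X₁), (x : X₁ × X₂).2) : X₁ × X₂)) = y)) :
    ∃ s : ℂ, 0 < s.re ∧ PencilBddInv s (blockE (E₁ : X₁ →L[ℂ] X₁))
      (blockQ (Q₁ : X₁ →L[ℂ] X₁) (Q₂ : X₂ →L[ℂ] X₂)) A := by
  obtain ⟨ε, hε, hdiss, l, hl, hsurj⟩ := hpert
  obtain ⟨-, c, hc, hcE⟩ := hcoer
  refine ⟨1, by simp, ?_⟩
  -- the Hilbert norm on the product is equivalent to the sup norm through `Φ`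
  let Φ := WithLp.prodContinuousLinearEquiv 2 ℂ X₁ X₂
  let K₀ : (X₁ × X₂) →L[ℂ] (X₁ × X₂) :=
    ((E₁ : X₁ →L[ℂ] X₁).comp (Q₁.symm : X₁ →L[ℂ] X₁)).prodMap
      ((ε : ℂ) • ContinuousLinearMap.id ℂ X₂)
  let K : WithLp 2 (X₁ × X₂) →L[ℂ] WithLp 2 (X₁ × X₂) :=
    (Φ.symm : (X₁ × X₂) →L[ℂ] _).comp (K₀.comp (Φ : _ →L[ℂ] (X₁ × X₂)))
  let N : (X₁ × X₂) →ₗ[ℂ] (X₁ × X₂) := LinearMap.prodMap 0 ((ε : ℂ) • LinearMap.id)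
  let ι : A.domain →ₗ[ℂ] WithLp 2 (X₁ × X₂) := Φ.symm.toLinearEquiv.toLinearMap ∘ₗ A.domain.subtype
  let B : A.domain →ₗ[ℂ] WithLp 2 (X₁ × X₂) :=
    Φ.symm.toLinearEquiv.toLinearMap ∘ₗ (A.toFun + N ∘ₗ A.domain.subtype)
  have hΦι : ∀ x : A.domain, Φ (ι x) = x := fun x => rfl
  have hΦB : ∀ x : A.domain,
      Φ (B x) = A x + (ε : ℂ) • (((0 : X₁), (x : X₁ × X₂).2) : X₁ × X₂) := by
    intro x
    change A x + N x = _
    congr 1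
    ext <;> simp [N]
  have hinner : ∀ u v : WithLp 2 (X₁ × X₂), (⟪u, v⟫).re = reInner2 (Φ u) (Φ v) := by
    intro u v
    rw [WithLp.prod_inner_apply, Complex.add_re]
    rfl
  have hι : Function.Injective ι := fun x y h => by
    have := congrArg Φ h
    rw [hΦι, hΦι] at this
    exact Subtype.ext this
  have hB : ∀ x, (⟪B x, ι x⟫).re ≤ 0 := fun x => by
    rw [hinner, hΦB, hΦι]; exact hdiss x
  have hsurj' : ∀ y, ∃ x, (l : ℂ) • ι x - B x = y := fun y => by
    obtain ⟨x, hx⟩ := hsurj (Φ y)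
    refine ⟨x, Φ.injective ?_⟩
    rw [map_sub, map_smul, hΦB, hΦι, hx]
  let q : ℝ := ‖(Q₁ : X₁ →L[ℂ] X₁)‖ + 1
  have hq : 0 < q := by positivity
  let k : ℝ := min (c / q ^ 2) ε
  have hk : 0 < k := lt_min (by positivity) hε
  have hP : ∀ z : X₁, c / q ^ 2 * ‖z‖ ^ 2 ≤ (⟪E₁ (Q₁.symm z), z⟫).re := by
    intro z
    have h1 := hcE (Q₁.symm z)
    have h2 : (⟪E₁ (Q₁.symm z), z⟫).re = (⟪z, E₁ (Q₁.symm z)⟫).re := inner_re_symm (𝕜 := ℂ) _ _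
    rw [ContinuousLinearMap.comp_apply, adjoint_inner_left] at h1
    simp only [ContinuousLinearEquiv.coe_coe, ContinuousLinearEquiv.apply_symm_apply] at h1
    rw [h2]
    refine le_trans ?_ h1
    have h3 : ‖z‖ ≤ q * ‖Q₁.symm z‖ := by
      have h := (Q₁ : X₁ →L[ℂ] X₁).le_opNorm (Q₁.symm z)
      simp only [ContinuousLinearEquiv.coe_coe, ContinuousLinearEquiv.apply_symm_apply] at h
      refine h.trans ?_
      gcongr
      exact (lt_add_one _).le
    have h4 : ‖z‖ ^ 2 ≤ q ^ 2 * ‖Q₁.symm z‖ ^ 2 := by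
      rw [← mul_pow]; gcongr
    calc c / q ^ 2 * ‖z‖ ^ 2 ≤ c / q ^ 2 * (q ^ 2 * ‖Q₁.symm z‖ ^ 2) := by gcongr
      _ = c * ‖Q₁.symm z‖ ^ 2 := by field_simp
  have hK : ∀ z, k * ‖z‖ ^ 2 ≤ (⟪K z, z⟫).re := by
    intro z
    have hz : (⟪K z, z⟫).re = (⟪E₁ (Q₁.symm z.fst), z.fst⟫).re + ε * ‖z.snd‖ ^ 2 := by
      rw [hinner]
      change (⟪E₁ (Q₁.symm z.fst), z.fst⟫).re + (⟪(ε : ℂ) • z.snd, z.snd⟫).re = _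
      simp [← Complex.ofReal_pow]
    rw [hz, WithLp.prod_norm_sq_eq_of_L2, mul_add]
    refine add_le_add (le_trans ?_ (hP _)) ?_
    · gcongr
      exact min_le_left _ _
    · gcongr
      exact min_le_right _ _
  have hlow := norm_le_of_dissipative_s9 ι B hB K hK
  -- after the substitution `z = Q x` the pencil at `s = 1` is `K - B`, since the terms `ε z₂` cancel
  have hpen : ∀ x : {x : X₁ × X₂ // blockQ (Q₁ : X₁ →L[ℂ] X₁) (Q₂ : X₂ →L[ℂ] X₂) x ∈ A.domain},
      pencilApply 1 (blockE (E₁ : X₁ →L[ℂ] X₁))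
        (blockQ (Q₁ : X₁ →L[ℂ] X₁) (Q₂ : X₂ →L[ℂ] X₂)) A x
      = Φ (K (ι ⟨_, x.2⟩) - B ⟨_, x.2⟩) := by
    intro x
    have hKι : Φ (K (ι ⟨_, x.2⟩)) = (E₁ x.1.1, (ε : ℂ) • Q₂ x.1.2) := by
      change ((E₁ (Q₁.symm (Q₁ x.1.1)), (ε : ℂ) • Q₂ x.1.2) : X₁ × X₂) = _
      rw [Q₁.symm_apply_apply]
    rw [map_sub, hΦB, hKι, pencilApply, one_smul]
    ext <;> simp [blockE, blockQ]
  let G : WithLp 2 (X₁ × X₂) →L[ℂ] (X₁ × X₂) :=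
    ((Q₁.symm : X₁ →L[ℂ] X₁).prodMap (Q₂.symm : X₂ →L[ℂ] X₂)).comp (Φ : _ →L[ℂ] (X₁ × X₂))
  have hG : ∀ x : {x : X₁ × X₂ // blockQ (Q₁ : X₁ →L[ℂ] X₁) (Q₂ : X₂ →L[ℂ] X₂) x ∈ A.domain},
      G (ι ⟨_, x.2⟩) = x.1 := by
    intro x
    change ((Q₁.symm (Q₁ x.1.1), Q₂.symm (Q₂ x.1.2)) : X₁ × X₂) = _
    simp
  refine ⟨⟨fun x x' h => ?_, fun y => ?_⟩, ?_⟩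
  · rw [hpen, hpen] at h
    have h' := Φ.injective h
    have h1 := hlow (⟨_, x.2⟩ - ⟨_, x'.2⟩)
    rw [map_sub, map_sub, map_sub, sub_sub_sub_comm, h', sub_self, norm_zero] at h1
    have h2 : ‖ι ⟨_, x.2⟩ - ι ⟨_, x'.2⟩‖ = 0 := le_antisymm (by nlinarith) (norm_nonneg _)
    have h3 : ι ⟨_, x.2⟩ = ι ⟨_, x'.2⟩ := sub_eq_zero.1 (norm_eq_zero.1 h2)
    exact Subtype.ext (by rw [← hG x, ← hG x', h3])
  · obtain ⟨z, hz⟩ := surjective_of_maxDissipative ι B hι hB hl hsurj' K hk hK (Φ.symm y)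
    have hQ : blockQ (Q₁ : X₁ →L[ℂ] X₁) (Q₂ : X₂ →L[ℂ] X₂) (Q₁.symm z.1.1, Q₂.symm z.1.2) = z.1 := by
      simp [blockQ]
    have hmem := z.2
    rw [← hQ] at hmem
    refine ⟨⟨(Q₁.symm z.1.1, Q₂.symm z.1.2), hmem⟩, ?_⟩
    rw [hpen]
    have hzz : (⟨_, hmem⟩ : A.domain) = z := Subtype.ext hQ
    rw [hzz, hz, Φ.apply_symm_apply]
  · let Ψ : (X₁ × X₂) →L[ℂ] WithLp 2 (X₁ × X₂) := Φ.symm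
    refine ⟨‖G‖ * (‖Ψ‖ / k) + 1, by positivity, fun x => ?_⟩
    have h1 := hlow ⟨_, x.2⟩
    have h2 : K (ι ⟨_, x.2⟩) - B ⟨_, x.2⟩ = Ψ
        (pencilApply 1 (blockE (E₁ : X₁ →L[ℂ] X₁))
          (blockQ (Q₁ : X₁ →L[ℂ] X₁) (Q₂ : X₂ →L[ℂ] X₂)) A x) := by
      rw [hpen]; exact (Φ.symm_apply_apply _).symm
    rw [h2] at h1
    set p := pencilApply 1 (blockE (E₁ : X₁ →L[ℂ] X₁))
      (blockQ (Q₁ : X₁ →L[ℂ] X₁) (Q₂ : X₂ →L[ℂ] X₂)) A x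
    have h3 := h1.trans (Ψ.le_opNorm p)
    have h4 : ‖x.1‖ ≤ ‖G‖ * ‖ι ⟨_, x.2⟩‖ := by
      conv_lhs => rw [← hG x]
      exact G.le_opNorm _
    have h5 : ‖ι ⟨_, x.2⟩‖ ≤ ‖Ψ‖ * ‖p‖ / k := by
      rw [le_div_iff₀ hk, mul_comm]; exact h3
    calc ‖x.1‖ ≤ ‖G‖ * (‖Ψ‖ * ‖p‖ / k) := h4.trans (by gcongr)
      _ = ‖G‖ * (‖Ψ‖ / k) * ‖p‖ := by ring
      _ ≤ _ := by gcongr; exact (lt_add_one _).le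
end
end

section
/- Let X₁, X₂ be complex Hilbert spaces, X = X₁ × X₂, and A a dissipative linear operator on X with domain D(A). Let E, Ẽ, Q, Q̃ be two sets of block operators on X of the form E(x₁,x₂) = (E₁x₁, 0), Q(x₁,x₂) = (Q₁x₁, Q₂x₂) (similarly for Ẽ, Q̃), each with the diagonal components bounded and boundedly invertible and E₁*Q₁ (resp. Ẽ₁*Q̃₁) coercive, and let s, s̃ ∈ ℂ with Re s > 0 and Re s̃ > 0. Then the following are equivalent: (1) s̃·Ẽ − A∘Q̃ (with domain {x : Q̃x ∈ D(A)}) is injective; (2) s·E − A∘Q (with domain {x : Qx ∈ D(A)}) is injective; (3) for every x₂ ∈ X₂ with (0, x₂) ∈ D(A), A(0, x₂) = 0 implies x₂ = 0. -/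
/-!
If `s E x = A Q x`, dissipativity of `A` tested at `Q x` gives `Re ⟨s E₁ x₁, Q₁ x₁⟩ ≤ 0`, the second
component of `E x` being zero. Since `E₁* Q₁` is self-adjoint, `⟨E₁ x₁, Q₁ x₁⟩` is real, so the left
side equals `Re s · ⟨E₁* Q₁ x₁, x₁⟩`, and coercivity forces `x₁ = 0`. Hence the kernel of the pencil
consists of the vectors `(0, x₂)` with `A (0, Q₂ x₂) = 0`; as `Q₂` is bijective, it is trivial
exactly when `A (0, y) = 0` implies `y = 0`, a condition that involves neither `s` nor `E`, `Q`
(`pencil_injective_iff`, applied to both pencils).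
-/

noncomputable section

open Complex ContinuousLinearMap
open scoped ComplexInnerProductSpace

variable {X₁ X₂ : Type*}
  [NormedAddCommGroup X₁] [InnerProductSpace ℂ X₁] [CompleteSpace X₁]
  [NormedAddCommGroup X₂] [InnerProductSpace ℂ X₂] [CompleteSpace X₂]

/-- The Hilbert-space content: coercivity of `E* Q` makes `Re ⟨s E x, Q x⟩` positive for
`x ≠ 0`. Self-adjointness is what allows a non-real `s`. -/
lemma eq_zero_of_re_inner_nonpos {X : Type*} [NormedAddCommGroup X] [InnerProductSpace ℂ X]
    [CompleteSpace X] {E Q : X →L[ℂ] X} (h : Coercive ((ContinuousLinearMap.adjoint E).comp Q))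
    {s : ℂ} (hs : 0 < s.re) {x : X} (hx : (⟪s • E x, Q x⟫).re ≤ 0) : x = 0 := by
  obtain ⟨hsa, c, hc, hcx⟩ := h
  have h1 : ⟪((ContinuousLinearMap.adjoint E).comp Q) x, x⟫ = ⟪Q x, E x⟫ := by
    rw [ContinuousLinearMap.comp_apply, ContinuousLinearMap.adjoint_inner_left]
  have h2 : ⟪x, ((ContinuousLinearMap.adjoint E).comp Q) x⟫ = ⟪E x, Q x⟫ := by
    rw [ContinuousLinearMap.comp_apply, ContinuousLinearMap.adjoint_inner_right]
  have hsym : ⟪Q x, E x⟫ = ⟪E x, Q x⟫ := by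
    rw [← h1, ← h2]
    exact hsa.isSymmetric x x
  have him : (⟪E x, Q x⟫).im = 0 := by
    have h3 := congrArg Complex.im (inner_conj_symm (𝕜 := ℂ) (E x) (Q x))
    rw [hsym, Complex.conj_im] at h3
    linarith
  have hpos := hcx x
  rw [h1, hsym] at hpos
  rw [inner_smul_left, Complex.mul_re, him, Complex.conj_re, mul_zero, sub_zero] at hx
  have hr : (⟪E x, Q x⟫).re ≤ 0 := nonpos_of_mul_nonpos_right hx hs
  have hn : ‖x‖ ^ 2 ≤ 0 := nonpos_of_mul_nonpos_right (hpos.trans hr) hc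
  exact norm_eq_zero.mp (pow_eq_zero_iff two_ne_zero |>.mp (le_antisymm hn (sq_nonneg _)))

lemma pencil_injective_iff (A : (X₁ × X₂) →ₗ.[ℂ] (X₁ × X₂)) (hA : DissipativeProd A)
    (E₁ Q₁ : X₁ ≃L[ℂ] X₁) (Q₂ : X₂ ≃L[ℂ] X₂)
    (hcoer : Coercive ((ContinuousLinearMap.adjoint (E₁ : X₁ →L[ℂ] X₁)).comp
      (Q₁ : X₁ →L[ℂ] X₁)))
    (s : ℂ) (hs : 0 < s.re) :
    Function.Injective (pencilApply s (blockE (E₁ : X₁ →L[ℂ] X₁))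
        (blockQ (Q₁ : X₁ →L[ℂ] X₁) (Q₂ : X₂ →L[ℂ] X₂)) A) ↔
      ∀ (x₂ : X₂) (h : (((0 : X₁), x₂) : X₁ × X₂) ∈ A.domain),
        A ⟨((0 : X₁), x₂), h⟩ = 0 → x₂ = 0 := by
  constructor
  · intro hinj x₂ h hx
    have hq : blockQ (Q₁ : X₁ →L[ℂ] X₁) (Q₂ : X₂ →L[ℂ] X₂) ((0 : X₁), Q₂.symm x₂)
        = ((0 : X₁), x₂) := by simp [blockQ]
    have hq0 : blockQ (Q₁ : X₁ →L[ℂ] X₁) (Q₂ : X₂ →L[ℂ] X₂) (0 : X₁ × X₂) = 0 := by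
      simp [blockQ]
    have hm : blockQ (Q₁ : X₁ →L[ℂ] X₁) (Q₂ : X₂ →L[ℂ] X₂) (0 : X₁ × X₂) ∈ A.domain := by
      rw [hq0]
      exact A.domain.zero_mem
    have hA1 : A ⟨_, hq ▸ h⟩ = 0 := (congrArg A (Subtype.ext hq)).trans hx
    have hA0 : A ⟨_, hm⟩ = 0 :=
      (congrArg A (Subtype.ext hq0)).trans A.map_zero
    have key := @hinj ⟨((0 : X₁), Q₂.symm x₂), hq ▸ h⟩ ⟨0, hm⟩ (by
      simp only [pencilApply, hA1, hA0]
      simp [blockE])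
    simpa using congrArg (fun z => z.1.2) key
  · rintro hker ⟨x, hx⟩ ⟨y, hy⟩ hxy
    simp only [pencilApply] at hxy
    have hq : blockQ (Q₁ : X₁ →L[ℂ] X₁) (Q₂ : X₂ →L[ℂ] X₂) x
        - blockQ (Q₁ : X₁ →L[ℂ] X₁) (Q₂ : X₂ →L[ℂ] X₂) y
        = (Q₁ (x.1 - y.1), Q₂ (x.2 - y.2)) := by simp [blockQ]
    have hd : (Q₁ (x.1 - y.1), Q₂ (x.2 - y.2)) ∈ A.domain := hq ▸ A.domain.sub_mem hx hy
    have hAd : A ⟨_, hd⟩ = (s • E₁ (x.1 - y.1), 0) := by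
      have e : (⟨_, hd⟩ : A.domain) = ⟨_, hx⟩ - ⟨_, hy⟩ := Subtype.ext hq.symm
      rw [e, A.map_sub]
      have e2 : A ⟨_, hx⟩ - A ⟨_, hy⟩ = s • blockE (E₁ : X₁ →L[ℂ] X₁) x
          - s • blockE (E₁ : X₁ →L[ℂ] X₁) y := by
        rw [sub_eq_sub_iff_add_eq_add] at hxy ⊢
        rw [add_comm, ← hxy, add_comm]
      rw [e2]
      simp [blockE, smul_sub]
    have h1 : x.1 - y.1 = 0 := by
      refine eq_zero_of_re_inner_nonpos hcoer hs ?_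
      have hdis := hA ⟨_, hd⟩
      rw [hAd] at hdis
      simpa [reInner2] using hdis
    have hd' : ((0 : X₁), Q₂ (x.2 - y.2)) ∈ A.domain := by simpa [h1] using hd
    have h2 := hker _ hd' (by
      have e : (⟨_, hd'⟩ : A.domain) = ⟨_, hd⟩ := Subtype.ext (by simp [h1])
      rw [e, hAd, h1]
      simp)
    have h3 : x.2 - y.2 = 0 := Q₂.map_eq_zero_iff.mp h2
    exact Subtype.ext (Prod.ext (sub_eq_zero.mp h1) (sub_eq_zero.mp h3))

/-- Lemma `L:2.2-new` a: injectivity of the pencils `s̃ Ẽ - A Q̃` and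
`s E - A Q` are equivalent, and both are equivalent to: `A (0, x₂) = 0` implies `x₂ = 0`. -/
theorem statement_10
    (A : (X₁ × X₂) →ₗ.[ℂ] (X₁ × X₂)) (hA : DissipativeProd A)
    (E₁ Q₁ : X₁ ≃L[ℂ] X₁) (Q₂ : X₂ ≃L[ℂ] X₂)
    (F₁ P₁ : X₁ ≃L[ℂ] X₁) (P₂ : X₂ ≃L[ℂ] X₂)
    (hcoer : Coercive ((ContinuousLinearMap.adjoint (E₁ : X₁ →L[ℂ] X₁)).comp
      (Q₁ : X₁ →L[ℂ] X₁)))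
    (hcoer' : Coercive ((ContinuousLinearMap.adjoint (F₁ : X₁ →L[ℂ] X₁)).comp
      (P₁ : X₁ →L[ℂ] X₁)))
    (s : ℂ) (hs : 0 < s.re) (t : ℂ) (ht : 0 < t.re) :
    (Function.Injective (pencilApply t (blockE (F₁ : X₁ →L[ℂ] X₁))
        (blockQ (P₁ : X₁ →L[ℂ] X₁) (P₂ : X₂ →L[ℂ] X₂)) A) ↔
      ∀ (x₂ : X₂) (h : (((0 : X₁), x₂) : X₁ × X₂) ∈ A.domain),
        A ⟨((0 : X₁), x₂), h⟩ = 0 → x₂ = 0) ∧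
    (Function.Injective (pencilApply s (blockE (E₁ : X₁ →L[ℂ] X₁))
        (blockQ (Q₁ : X₁ →L[ℂ] X₁) (Q₂ : X₂ →L[ℂ] X₂)) A) ↔
      ∀ (x₂ : X₂) (h : (((0 : X₁), x₂) : X₁ × X₂) ∈ A.domain),
        A ⟨((0 : X₁), x₂), h⟩ = 0 → x₂ = 0) := by
  exact ⟨pencil_injective_iff A hA F₁ P₁ P₂ hcoer' t ht,
    pencil_injective_iff A hA E₁ Q₁ Q₂ hcoer s hs⟩
end
end

section
/- Let X₁, X₂ be complex Hilbert spaces, X = X₁ × X₂, and A a maximally dissipative linear operator on X with domain D(A) and Hilbert-space adjoint A*. Let E, Ẽ, Q, Q̃ be two sets of block operators on X of the form E(x₁,x₂) = (E₁x₁, 0), Q(x₁,x₂) = (Q₁x₁, Q₂x₂) (similarly for Ẽ, Q̃), each with the diagonal components bounded and boundedly invertible and E₁*Q₁ (resp. Ẽ₁*Q̃₁) coercive, and let s, s̃ ∈ ℂ with Re s > 0 and Re s̃ > 0. Then the following are equivalent: (1) the range of s̃·Ẽ − A∘Q̃ (with domain {x : Q̃x ∈ D(A)}) is dense in X; (2)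 the range of s·E − A∘Q (with domain {x : Qx ∈ D(A)}) is dense in X; (3) for every z₂ ∈ X₂ with (0, z₂) ∈ D(A*), A*(0, z₂) = 0 implies z₂ = 0. -/
/-!
With `w = Q x` the range of `s E - A Q` is the range of `w ↦ s (E₁ Q₁⁻¹ w₁, 0) - A w` on `D(A)`,
a subspace, so it is dense iff its orthogonal complement is trivial. A vector `z` is orthogonal to
it iff `z ∈ D(A*)` and `A* z = v` with `v = ((s E₁ Q₁⁻¹)* z₁, 0)`. Since `A` is maximally
dissipative, `A*` is dissipative (`re_inner_nonpos_of_adjoint_pair`), so `Re ⟨z, v⟩ ≤ 0`. With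
`y = Q₁⁻¹ z₁`, the inner product `⟨z, v⟩` is `conj s · ⟨E₁* Q₁ y, y⟩`, and coercivity makes
`⟨E₁* Q₁ y, y⟩` real and at least `c ‖y‖²`; hence `y = 0` and `z₁ = 0`. Orthogonal vectors
therefore have the form `(0, z₂)` and are exactly those with `A* (0, z₂) = 0`, a condition that
does not involve `s`, `E`, `Q`.
-/

noncomputable section

open Complex ContinuousLinearMap
open scoped ComplexInnerProductSpace

variable {X₁ X₂ : Type*}
  [NormedAddCommGroup X₁] [InnerProductSpace ℂ X₁] [CompleteSpace X₁]
  [NormedAddCommGroup X₂] [InnerProductSpace ℂ X₂] [CompleteSpace X₂]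

/-- Pointwise form of "the adjoint of a maximally dissipative operator is dissipative": `z`, `v`
stand for `z ∈ D(A*)` and `v = A* z`, while `x`, `a` stand for the solution `x ∈ D(A)` of
`(l - A) x = l z + v` and `a = A x`. The Cayley transform `(l + A)(l - A)⁻¹` is a contraction, hence
so is its adjoint, which gives `‖l z + v‖ ≤ ‖l z - v‖`. -/
lemma re_inner_nonpos_of_adjoint_pair {H : Type*} [NormedAddCommGroup H] [InnerProductSpace ℂ H]
    (l : ℝ) (hl : 0 < l) (x a z v : H) (hsolve : (l : ℂ) • x - a = (l : ℂ) • z + v)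
    (hdiss : (⟪a, x⟫).re ≤ 0) (hadj : (⟪z, a⟫).re = (⟪v, x⟫).re) : (⟪z, v⟫).re ≤ 0 := by
  have expand_add (p q : H) :
      ‖(l : ℂ) • p + q‖ ^ 2 = l ^ 2 * ‖p‖ ^ 2 + 2 * l * (⟪p, q⟫).re + ‖q‖ ^ 2 := by
    have h := norm_add_sq (𝕜 := ℂ) ((l : ℂ) • p) q
    rw [h, inner_smul_left, norm_smul]
    simp [mul_pow]
    ring
  have expand_sub (p q : H) :
      ‖(l : ℂ) • p - q‖ ^ 2 = l ^ 2 * ‖p‖ ^ 2 - 2 * l * (⟪p, q⟫).re + ‖q‖ ^ 2 := by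
    have h := norm_sub_sq (𝕜 := ℂ) ((l : ℂ) • p) q
    rw [h, inner_smul_left, norm_smul]
    simp [mul_pow]
    ring
  have hdiss' : (⟪x, a⟫).re ≤ 0 := by
    have h : (⟪x, a⟫).re = (⟪a, x⟫).re := inner_re_symm (𝕜 := ℂ) x a
    rwa [h]
  have hcayley : ‖(l : ℂ) • x + a‖ ≤ ‖(l : ℂ) • z + v‖ := by
    rw [← hsolve]
    refine le_of_sq_le_sq ?_ (norm_nonneg _)
    rw [expand_add, expand_sub]
    nlinarith
  -- Both sides equal `l² Re ⟨z, x⟩ - Re ⟨v, a⟩`, because the cross terms cancel by `hadj`.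
  have hswap : (⟪(l : ℂ) • z - v, (l : ℂ) • x + a⟫).re
      = (⟪(l : ℂ) • z + v, (l : ℂ) • x - a⟫).re := by
    simp only [inner_sub_left, inner_add_left, inner_sub_right, inner_add_right, inner_smul_left,
      inner_smul_right, conj_ofReal, add_re, sub_re, re_ofReal_mul, hadj]
    ring
  have hsq : ‖(l : ℂ) • z + v‖ ^ 2 = (⟪(l : ℂ) • z - v, (l : ℂ) • x + a⟫).re := by
    rw [hswap, hsolve]
    exact (inner_self_eq_norm_sq (𝕜 := ℂ) _).symm
  have hcs : (⟪(l : ℂ) • z - v, (l : ℂ) • x + a⟫).re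
      ≤ ‖(l : ℂ) • z - v‖ * ‖(l : ℂ) • x + a‖ :=
    re_inner_le_norm (𝕜 := ℂ) _ _
  have hle : ‖(l : ℂ) • z + v‖ ≤ ‖(l : ℂ) • z - v‖ := by
    by_contra! hlt
    have h1 := norm_nonneg ((l : ℂ) • z - v)
    have h2 := mul_le_mul_of_nonneg_left hcayley h1
    nlinarith
  have hfin : ‖(l : ℂ) • z + v‖ ^ 2 ≤ ‖(l : ℂ) • z - v‖ ^ 2 := by gcongr
  rw [expand_add, expand_sub] at hfin
  nlinarith

lemma cInner2_conj_symm (x y : X₁ × X₂) : (starRingEnd ℂ) (cInner2 y x) = cInner2 x y := by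
  simp [cInner2, inner_conj_symm]

/-- The adjoint of a maximally dissipative operator on `X₁ × X₂` is dissipative; the hypothesis
says `z ∈ D(A*)` with `A* z = v`. -/
lemma cInner2_re_nonpos_of_adjoint_pair (A : (X₁ × X₂) →ₗ.[ℂ] (X₁ × X₂))
    (hA : MaxDissipativeProd A) (z v : X₁ × X₂)
    (hadj : ∀ x : A.domain, cInner2 z (A x) = cInner2 v x) : (cInner2 z v).re ≤ 0 := by
  obtain ⟨hdiss, l, hl, hsurj⟩ := hA
  obtain ⟨x, hx⟩ := hsurj ((l : ℂ) • z + v)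
  have h := re_inner_nonpos_of_adjoint_pair (H := WithLp 2 (X₁ × X₂)) l hl
    (WithLp.toLp 2 (x : X₁ × X₂)) (WithLp.toLp 2 (A x)) (WithLp.toLp 2 z) (WithLp.toLp 2 v)
    (by rw [← WithLp.toLp_smul, ← WithLp.toLp_sub, hx]; rfl)
    (by simpa [reInner2, WithLp.prod_inner_apply] using hdiss x)
    (by simpa [cInner2, WithLp.prod_inner_apply] using congrArg Complex.re (hadj x))
  simpa [cInner2, WithLp.prod_inner_apply] using h

/-- A subspace of `X₁ × X₂` is dense iff its orthogonal complement for `cInner2` is trivial. The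
density refers to the product topology, which agrees with that of `WithLp 2 (X₁ × X₂)`. -/
lemma dense_iff_forall_cInner2 (S : Submodule ℂ (X₁ × X₂)) :
    Dense (S : Set (X₁ × X₂)) ↔ ∀ z, (∀ y ∈ S, cInner2 y z = 0) → z = 0 := by
  let e := WithLp.prodContinuousLinearEquiv 2 ℂ X₁ X₂
  let S' : Submodule ℂ (WithLp 2 (X₁ × X₂)) :=
    S.comap (e : WithLp 2 (X₁ × X₂) →ₗ[ℂ] (X₁ × X₂))
  have hdense : Dense (S : Set (X₁ × X₂)) ↔ Dense (S' : Set (WithLp 2 (X₁ × X₂))) := by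
    have hS' : (S' : Set (WithLp 2 (X₁ × X₂))) = e.toHomeomorph ⁻¹' (S : Set (X₁ × X₂)) := rfl
    rw [hS', dense_iff_closure_eq, dense_iff_closure_eq, ← e.toHomeomorph.preimage_closure,
      Set.preimage_eq_univ_iff, e.toHomeomorph.surjective.range_eq, Set.univ_subset_iff]
  rw [hdense, Submodule.dense_iff_topologicalClosure_eq_top,
    Submodule.topologicalClosure_eq_top_iff, Submodule.eq_bot_iff]
  constructor
  · intro h z hz
    have := h (WithLp.toLp 2 z) (by
      rw [Submodule.mem_orthogonal]
      intro u hu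
      exact hz (e u) hu)
    simpa using this
  · intro h z hz
    rw [Submodule.mem_orthogonal] at hz
    have := h (e z) (fun y hy => hz (WithLp.toLp 2 y) hy)
    simpa using this

/-- The theorem for a single pencil. The auxiliary map `L` parametrizes its range by `w = Q x`
in `D(A)`, so that `A* z = (M* z₁, 0)` characterizes orthogonality of `z` to the range. -/
lemma dense_range_pencil_iff
    (A : (X₁ × X₂) →ₗ.[ℂ] (X₁ × X₂)) (hA : MaxDissipativeProd A)
    (E₁ Q₁ : X₁ ≃L[ℂ] X₁) (Q₂ : X₂ ≃L[ℂ] X₂)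
    (hcoer : Coercive ((ContinuousLinearMap.adjoint (E₁ : X₁ →L[ℂ] X₁)).comp
      (Q₁ : X₁ →L[ℂ] X₁)))
    (s : ℂ) (hs : 0 < s.re) :
    Dense (Set.range (pencilApply s (blockE (E₁ : X₁ →L[ℂ] X₁))
        (blockQ (Q₁ : X₁ →L[ℂ] X₁) (Q₂ : X₂ →L[ℂ] X₂)) A)) ↔
      ∀ z₂ : X₂, (∀ x : A.domain, cInner2 (A x) (((0 : X₁), z₂) : X₁ × X₂) = 0) → z₂ = 0 := by
  let M : X₁ →L[ℂ] X₁ := s • (E₁ : X₁ →L[ℂ] X₁).comp (Q₁.symm : X₁ →L[ℂ] X₁)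
  let N : (X₁ × X₂) →ₗ[ℂ] (X₁ × X₂) :=
    (LinearMap.inl ℂ X₁ X₂).comp ((M : X₁ →ₗ[ℂ] X₁).comp (LinearMap.fst ℂ X₁ X₂))
  let L : A.domain →ₗ[ℂ] (X₁ × X₂) := N.comp A.domain.subtype - A.toFun
  have hL (w : A.domain) : L w = (M (w : X₁ × X₂).1, 0) - A w := rfl
  have hrange : Set.range (pencilApply s (blockE (E₁ : X₁ →L[ℂ] X₁))
        (blockQ (Q₁ : X₁ →L[ℂ] X₁) (Q₂ : X₂ →L[ℂ] X₂)) A) = (LinearMap.range L : Set (X₁ × X₂)) := by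
    ext y
    constructor
    · rintro ⟨⟨x, hx⟩, rfl⟩
      refine ⟨⟨_, hx⟩, ?_⟩
      rw [hL]
      simp [pencilApply, M, blockE, blockQ]
    · rintro ⟨⟨w, hw⟩, rfl⟩
      have hQ : blockQ (Q₁ : X₁ →L[ℂ] X₁) (Q₂ : X₂ →L[ℂ] X₂) (Q₁.symm w.1, Q₂.symm w.2) = w := by
        simp [blockQ]
      refine ⟨⟨(Q₁.symm w.1, Q₂.symm w.2), by rwa [hQ]⟩, ?_⟩
      rw [hL]
      simp [pencilApply, M, blockE, hQ]
  rw [hrange, dense_iff_forall_cInner2]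
  have hcI (w : A.domain) (z : X₁ × X₂) :
      cInner2 (L w) z = ⟪M (w : X₁ × X₂).1, z.1⟫ - cInner2 (A w) z := by
    rw [hL]
    simp [cInner2, inner_neg_left]
    ring
  constructor
  · intro h z₂ hz₂
    have := h (0, z₂) (by
      rintro _ ⟨w, rfl⟩
      rw [hcI, hz₂]
      simp)
    simpa using this
  · intro h z hz
    have hz' (w : A.domain) : cInner2 (A w) z = ⟪M (w : X₁ × X₂).1, z.1⟫ := by
      have := hz _ ⟨w, rfl⟩
      rw [hcI, sub_eq_zero] at this
      exact this.symm
    have hre := cInner2_re_nonpos_of_adjoint_pair A hA z (ContinuousLinearMap.adjoint M z.1, 0) (by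
      intro w
      rw [← cInner2_conj_symm, hz', inner_conj_symm]
      simp [cInner2, ContinuousLinearMap.adjoint_inner_left])
    have hz1 : z.1 = 0 := by
      obtain ⟨hsa, c, hc, hpos⟩ := hcoer
      set y := Q₁.symm z.1 with hy
      have hQy : Q₁ y = z.1 := by simp [hy]
      have hval : cInner2 z (ContinuousLinearMap.adjoint M z.1, 0)
          = (starRingEnd ℂ) s * ⟪E₁ y, Q₁ y⟫ := by
        have hMz : M z.1 = s • E₁ y := rfl
        simp only [cInner2, inner_zero_right, add_zero, ContinuousLinearMap.adjoint_inner_right,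
          hMz, inner_smul_left, hQy]
      have hTleft : ⟪((ContinuousLinearMap.adjoint (E₁ : X₁ →L[ℂ] X₁)).comp
          (Q₁ : X₁ →L[ℂ] X₁)) y, y⟫ = ⟪Q₁ y, E₁ y⟫ := by
        rw [ContinuousLinearMap.comp_apply, ContinuousLinearMap.adjoint_inner_left]
        rfl
      have hTright : ⟪((ContinuousLinearMap.adjoint (E₁ : X₁ →L[ℂ] X₁)).comp
          (Q₁ : X₁ →L[ℂ] X₁)) y, y⟫ = ⟪E₁ y, Q₁ y⟫ := by
        rw [← ContinuousLinearMap.adjoint_inner_right, hsa.adjoint_eq,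
          ContinuousLinearMap.comp_apply, ContinuousLinearMap.adjoint_inner_right]
        rfl
      have him : (⟪E₁ y, Q₁ y⟫).im = 0 := by
        rw [← conj_eq_iff_im, inner_conj_symm, ← hTleft, hTright]
      have hge : c * ‖y‖ ^ 2 ≤ (⟪E₁ y, Q₁ y⟫).re := by
        rw [← hTright]
        exact hpos y
      have hy0 : y = 0 := by
        rw [hval, mul_re, him] at hre
        simp only [conj_re, mul_zero, sub_zero] at hre
        have h1 : (⟪E₁ y, Q₁ y⟫).re ≤ 0 := by
          by_contra! h2
          nlinarith [mul_pos hs h2]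
        have h3 : ‖y‖ ^ 2 ≤ 0 := by
          by_contra! h4
          nlinarith [mul_pos hc h4]
        simpa using h3
      rw [← hQy, hy0, map_zero]
    have hz2 : z.2 = 0 := h z.2 (fun w => by
      have hzeq : ((0 : X₁), z.2) = z := Prod.ext hz1.symm rfl
      rw [hzeq, hz', hz1, inner_zero_right])
    exact Prod.ext hz1 hz2

/-- Lemma `L:2.2-new` b: for maximally dissipative `A`, density of the range of
`s̃ Ẽ - A Q̃` and of `s E - A Q` are equivalent, and both are equivalent to: `(0, z₂) ∈ D(A*)`
with `A* (0, z₂) = 0` implies `z₂ = 0` (phrased via the defining property of the adjoint: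
`⟨A x, (0, z₂)⟩ = 0` for all `x ∈ D(A)` implies `z₂ = 0`). -/
theorem statement_11
    (A : (X₁ × X₂) →ₗ.[ℂ] (X₁ × X₂)) (hA : MaxDissipativeProd A)
    (E₁ Q₁ : X₁ ≃L[ℂ] X₁) (Q₂ : X₂ ≃L[ℂ] X₂)
    (F₁ P₁ : X₁ ≃L[ℂ] X₁) (P₂ : X₂ ≃L[ℂ] X₂)
    (hcoer : Coercive ((ContinuousLinearMap.adjoint (E₁ : X₁ →L[ℂ] X₁)).comp
      (Q₁ : X₁ →L[ℂ] X₁)))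
    (hcoer' : Coercive ((ContinuousLinearMap.adjoint (F₁ : X₁ →L[ℂ] X₁)).comp
      (P₁ : X₁ →L[ℂ] X₁)))
    (s : ℂ) (hs : 0 < s.re) (t : ℂ) (ht : 0 < t.re) :
    (Dense (Set.range (pencilApply t (blockE (F₁ : X₁ →L[ℂ] X₁))
        (blockQ (P₁ : X₁ →L[ℂ] X₁) (P₂ : X₂ →L[ℂ] X₂)) A)) ↔
      ∀ z₂ : X₂, (∀ x : A.domain, cInner2 (A x) (((0 : X₁), z₂) : X₁ × X₂) = 0) → z₂ = 0) ∧
    (Dense (Set.range (pencilApply s (blockE (E₁ : X₁ →L[ℂ] X₁))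
        (blockQ (Q₁ : X₁ →L[ℂ] X₁) (Q₂ : X₂ →L[ℂ] X₂)) A)) ↔
      ∀ z₂ : X₂, (∀ x : A.domain, cInner2 (A x) (((0 : X₁), z₂) : X₁ × X₂) = 0) → z₂ = 0) := by
  exact ⟨dense_range_pencil_iff A hA F₁ P₁ P₂ hcoer' t ht,
    dense_range_pencil_iff A hA E₁ Q₁ Q₂ hcoer s hs⟩
end
end

section
/- Let V, X₁, U be real Hilbert spaces, j : V → X₁ an injective bounded linear map with dense range, V* the topological dual of V, and ι : X₁ → V* the (injective) embedding (ι x)(v) = ⟨x, j v⟩. Let A₀ : V → V*, B₀ : U → V* be bounded linear operators, B₀* : V → U the bounded operator determined by ⟨B₀* v, u⟩ = (B₀ u)(v), and D₀ : U → U a bounded operator. Define the operator A on X₁ × U with domain D(A) = {(j v, u) : v ∈ V, u ∈ U, A₀ v + B₀ u ∈ ran ι} and action A(j v, u) = (ι⁻¹(A₀ v + B₀ u), −B₀* v − D₀ u). If (A₀ v)(v) ≤ 0 for all v ∈ V and ⟨D₀ u, u⟩ ≥ 0 for all u ∈ U, then A is dissipative on X₁ × U, i.e., ⟨A z, z⟩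 ≤ 0 for all z ∈ D(A). -/
noncomputable section

open scoped RealInnerProductSpace

variable {V X₁ U : Type*}
  [NormedAddCommGroup V] [InnerProductSpace ℝ V] [CompleteSpace V]
  [NormedAddCommGroup X₁] [InnerProductSpace ℝ X₁] [CompleteSpace X₁]
  [NormedAddCommGroup U] [InnerProductSpace ℝ U] [CompleteSpace U]
/-- Lemma `L:12`: the block operator
`A = [[A₀, B₀], [-B₀*, -D₀]]` with domain `{(j v, u) : A₀ v + B₀ u ∈ ran ι}` is dissipative on
`X₁ × U` as soon as `A₀` and `-D₀` are dissipative. Here `V ⊂ X₁ ⊂ V*` is a Gelfand triple: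
`j : V → X₁` is injective with dense range and `ι : X₁ → V*` is `(ι x)(v) = ⟨x, j v⟩`. -/
theorem statement_12
    (j : V →L[ℝ] X₁) (hj_inj : Function.Injective j) (hj_dense : DenseRange j)
    (ι : X₁ →L[ℝ] (V →L[ℝ] ℝ)) (hι : ∀ (x : X₁) (v : V), ι x v = ⟪x, j v⟫)
    (A₀ : V →L[ℝ] (V →L[ℝ] ℝ)) (B₀ : U →L[ℝ] (V →L[ℝ] ℝ))
    (B₀s : V →L[ℝ] U) (hB₀s : ∀ (v : V) (u : U), ⟪B₀s v, u⟫ = B₀ u v)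
    (D₀ : U →L[ℝ] U)
    (hA₀ : ∀ v : V, A₀ v v ≤ 0) (hD₀ : ∀ u : U, 0 ≤ ⟪D₀ u, u⟫) :
    -- `⟨A z, z⟩ ≤ 0` for every `z = (j v, u)` in the domain of `A`,
    -- where `A (j v, u) = (w, -B₀* v - D₀ u)` with `ι w = A₀ v + B₀ u`:
    ∀ (v : V) (u : U) (w : X₁), ι w = A₀ v + B₀ u →
      ⟪w, j v⟫ + ⟪-B₀s v - D₀ u, u⟫ ≤ 0 := by
  intro v u w hw
  -- Testing `ι w = A₀ v + B₀ u` against `v` gives `⟪w, j v⟫ = A₀ v v + B₀ u v`; the term `B₀ u v`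
  -- cancels against `⟪-B₀s v, u⟫`, leaving `A₀ v v - ⟪D₀ u, u⟫`.
  have h : ⟪w, j v⟫ = A₀ v v + B₀ u v := by
    rw [← hι, hw, add_apply]
  rw [h, inner_sub_left, inner_neg_left, hB₀s]
  linarith [hA₀ v, hD₀ u]
end
end
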